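/- Let d ≥ 2 be an integer. There exists a constant C, depending only on d, such that for all integers n ≥ d and m ≥ 2, the standardized number W_{n,m} of urns containing exactly d balls in the uniform occupancy model satisfies sup_{z ∈ ℝ} |P(W_{n,m} ≤ z) − P(Z ≤ z)| ≤ C / r_{n,m}, where r_{n,m} = σ_{n,m}/(1 + (n/m)³). -/

import Mathlib

open MeasureTheory ProbabilityTheory Filter

/-- The uniform occupancy model: `n` balls are placed independently and uniformly at
random into `m` urns; an outcome assigns to each ball its urn. -/
noncomputable def occ (n m : ℕ) : Measure (Fin n → Fin m) :=
  (Fintype.card (Fin n → Fin m) : ENNReal)⁻¹ • Measure.count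

/-- The number of balls in urn `i`. -/
def ballCount {n m : ℕ} (ω : Fin n → Fin m) (i : Fin m) : ℕ :=
  (Finset.univ.filter fun b => ω b = i).card

/-- The number of urns containing exactly `d` balls. -/
def urnCount (d : ℕ) {n m : ℕ} (ω : Fin n → Fin m) : ℕ :=
  (Finset.univ.filter fun i => ballCount ω i = d).card

/-- `μ_{n,m}`, the mean number of urns containing exactly `d` balls. -/
noncomputable def occMean (d n m : ℕ) : ℝ :=
  ∫ ω, (urnCount d ω : ℝ) ∂(occ n m)

/-- `σ²_{n,m}`, the variance of the number of urns containing exactly `d` balls. -/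
noncomputable def occVar (d n m : ℕ) : ℝ :=
  variance (fun ω => (urnCount d ω : ℝ)) (occ n m)

/-- `r_{n,m} = σ_{n,m} / (1 + (n/m)³)`. -/
noncomputable def occR (d n m : ℕ) : ℝ :=
  Real.sqrt (occVar d n m) / (1 + ((n : ℝ) / m) ^ 3)

/-- The standard normal distribution function `P(Z ≤ z)`. -/
noncomputable def stdGaussCDF (z : ℝ) : ℝ :=
  (gaussianReal 0 1 (Set.Iic z)).toReal

/-- `P(W_{n,m} ≤ z) − P(Z ≤ z)`, where `W_{n,m}` is the standardized count. -/
noncomputable def occKolm (d n m : ℕ) (z : ℝ) : ℝ :=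
  ((occ n m) {ω | ((urnCount d ω : ℝ) - occMean d n m) / Real.sqrt (occVar d n m) ≤ z}).toReal
    - stdGaussCDF z

open scoped BigOperators

local notation "gaussPDF" => gaussianPDFReal 0 1

lemma gaussPDF_apply (x : ℝ) :
    gaussPDF x = (Real.sqrt (2 * Real.pi))⁻¹ * Real.exp (-(1 / 2) * x ^ 2) := by
  rw [gaussianPDFReal]
  congr 2 <;> simp
  ring

lemma gaussPDF_neg (x : ℝ) : gaussPDF (-x) = gaussPDF x := by
  simp [gaussPDF_apply]

lemma gaussPDF_pos (x : ℝ) : 0 < gaussPDF x :=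
  gaussianPDFReal_pos 0 1 x one_ne_zero

lemma hasDerivAt_gaussPDF (x : ℝ) : HasDerivAt gaussPDF (-(x * gaussPDF x)) x := by
  have h : HasDerivAt (fun x : ℝ => (Real.sqrt (2 * Real.pi))⁻¹ * Real.exp (-(1 / 2) * x ^ 2))
      ((Real.sqrt (2 * Real.pi))⁻¹ * (Real.exp (-(1 / 2) * x ^ 2) * (-(1 / 2) * (2 * x)))) x := by
    have := ((hasDerivAt_pow 2 x).const_mul (-(1 / 2 : ℝ))).exp.const_mul
      (Real.sqrt (2 * Real.pi))⁻¹
    simpa using this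
  have e : (gaussPDF : ℝ → ℝ) =
      fun x : ℝ => (Real.sqrt (2 * Real.pi))⁻¹ * Real.exp (-(1 / 2) * x ^ 2) :=
    funext gaussPDF_apply
  rw [e]
  convert h using 1
  ring

lemma stdGaussCDF_eq_cdf : stdGaussCDF = cdf (gaussianReal 0 1) := by
  ext z
  rw [cdf_eq_real]; rfl

lemma stdGaussCDF_eq_integral (z : ℝ) : stdGaussCDF z = ∫ x in Set.Iic z, gaussPDF x := by
  rw [stdGaussCDF, gaussianReal_apply_eq_integral _ one_ne_zero, ENNReal.toReal_ofReal]
  exact setIntegral_nonneg measurableSet_Iic fun x _ => (gaussPDF_pos x).le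

lemma stdGaussCDF_nonneg (z : ℝ) : 0 ≤ stdGaussCDF z := ENNReal.toReal_nonneg

lemma stdGaussCDF_le_one (z : ℝ) : stdGaussCDF z ≤ 1 := by
  rw [stdGaussCDF_eq_cdf]; exact cdf_le_one _ z

lemma monotone_stdGaussCDF : Monotone stdGaussCDF := by
  rw [stdGaussCDF_eq_cdf]; exact monotone_cdf _

lemma hasDerivAt_stdGaussCDF (z : ℝ) : HasDerivAt stdGaussCDF (gaussPDF z) z := by
  have hi : Integrable (gaussPDF : ℝ → ℝ) := integrable_gaussianPDFReal 0 1
  have hc : Continuous (gaussPDF : ℝ → ℝ) :=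
    continuous_iff_continuousAt.2 fun x => (hasDerivAt_gaussPDF x).continuousAt
  have h := (intervalIntegral.integral_hasDerivAt_right (hi.intervalIntegrable (a := 0) (b := z))
    (hc.stronglyMeasurableAtFilter _ _) hc.continuousAt).const_add (stdGaussCDF 0)
  refine h.congr_of_eventuallyEq (Eventually.of_forall fun x => ?_)
  simp only [stdGaussCDF_eq_integral]
  rw [← intervalIntegral.integral_Iic_sub_Iic hi.integrableOn hi.integrableOn]
  simp

lemma stdGaussCDF_neg (z : ℝ) : stdGaussCDF (-z) = 1 - stdGaussCDF z := by
  have hmap : (gaussianReal 0 1).map (fun x : ℝ => -x) = gaussianReal 0 1 := by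
    rw [gaussianReal_map_neg, neg_zero]
  have h1 : gaussianReal 0 1 (Set.Iic (-z)) = gaussianReal 0 1 (Set.Ici z) := by
    conv_lhs => rw [← hmap]
    rw [Measure.map_apply measurable_neg measurableSet_Iic]
    congr 1
    ext x; simp
  have h2 : gaussianReal 0 1 (Set.Ici z) = gaussianReal 0 1 (Set.Ioi z) := by
    have := nullSingletonClass_gaussianReal (μ := 0) (v := 1) one_ne_zero
    exact measure_congr Ioi_ae_eq_Ici.symm
  have h3 : (gaussianReal 0 1).real (Set.Iic z)ᶜ = 1 - (gaussianReal 0 1).real (Set.Iic z) :=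
    probReal_compl_eq_one_sub measurableSet_Iic
  rw [Set.compl_Iic] at h3
  rw [stdGaussCDF, h1, h2]
  exact h3

lemma tendsto_gaussPDF_atBot : Tendsto gaussPDF atBot (nhds 0) := by
  have h := (tendsto_rpow_abs_mul_exp_neg_mul_sq_cocompact (a := 1 / 2) (by norm_num) 0).mono_left
    atBot_le_cocompact
  have h' := h.const_mul (Real.sqrt (2 * Real.pi))⁻¹
  rw [mul_zero] at h'
  refine h'.congr fun x => ?_
  simp [gaussPDF_apply]

lemma tendsto_mul_gaussPDF_atBot : Tendsto (fun x => x * gaussPDF x) atBot (nhds 0) := by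
  have h := (tendsto_rpow_abs_mul_exp_neg_mul_sq_cocompact (a := 1 / 2) (by norm_num) 1).mono_left
    atBot_le_cocompact
  have h' := h.const_mul (Real.sqrt (2 * Real.pi))⁻¹
  rw [mul_zero] at h'
  refine squeeze_zero_norm (fun x => ?_) h'
  rw [gaussPDF_apply, Real.norm_eq_abs, abs_mul, abs_mul, Real.abs_exp, Real.rpow_one,
    abs_of_nonneg (inv_nonneg.2 (Real.sqrt_nonneg _))]
  exact le_of_eq (by ring)

lemma tendsto_stdGaussCDF_atBot : Tendsto stdGaussCDF atBot (nhds 0) := by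
  rw [stdGaussCDF_eq_cdf]; exact tendsto_cdf_atBot _

/-- The first iterated integral of the Gaussian distribution function is nonnegative. -/
lemma mul_stdGaussCDF_add_gaussPDF_nonneg (w : ℝ) : 0 ≤ w * stdGaussCDF w + gaussPDF w := by
  have hd : ∀ x, HasDerivAt (fun x => w * stdGaussCDF x + gaussPDF x)
      ((w - x) * gaussPDF x) x := fun x =>
    (((hasDerivAt_stdGaussCDF x).const_mul w).add (hasDerivAt_gaussPDF x)).congr_deriv (by ring)
  have hm : MonotoneOn (fun x => w * stdGaussCDF x + gaussPDF x) (Set.Iic w) := by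
    refine monotoneOn_of_deriv_nonneg (convex_Iic w)
      (fun x _ => (hd x).continuousAt.continuousWithinAt)
      (fun x _ => (hd x).differentiableAt.differentiableWithinAt) fun x hx => ?_
    rw [(hd x).deriv]
    rw [interior_Iic] at hx
    exact mul_nonneg (sub_nonneg.2 (le_of_lt hx)) (gaussPDF_pos x).le
  have hl : Tendsto (fun x => w * stdGaussCDF x + gaussPDF x) atBot (nhds 0) := by
    simpa using (tendsto_stdGaussCDF_atBot.const_mul w).add tendsto_gaussPDF_atBot
  refine le_of_tendsto hl ?_
  filter_upwards [eventually_le_atBot w] with x hx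
  exact hm hx Set.self_mem_Iic hx

/-- The second iterated integral of the Gaussian distribution function is nonnegative. -/
lemma one_add_sq_mul_stdGaussCDF_add_nonneg (w : ℝ) :
    0 ≤ (1 + w ^ 2) * stdGaussCDF w + w * gaussPDF w := by
  have hd : ∀ x, HasDerivAt
      (fun x => (1 + w ^ 2) * stdGaussCDF x + 2 * w * gaussPDF x - x * gaussPDF x)
      ((w - x) ^ 2 * gaussPDF x) x := fun x =>
    ((((hasDerivAt_stdGaussCDF x).const_mul (1 + w ^ 2)).add
      ((hasDerivAt_gaussPDF x).const_mul (2 * w))).sub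
      ((hasDerivAt_id x).mul (hasDerivAt_gaussPDF x))).congr_deriv (by simp only [id]; ring)
  have hm : Monotone (fun x => (1 + w ^ 2) * stdGaussCDF x + 2 * w * gaussPDF x
      - x * gaussPDF x) := by
    refine monotone_of_deriv_nonneg (fun x => (hd x).differentiableAt) fun x => ?_
    rw [(hd x).deriv]
    exact mul_nonneg (sq_nonneg _) (gaussPDF_pos x).le
  have hl : Tendsto (fun x => (1 + w ^ 2) * stdGaussCDF x + 2 * w * gaussPDF x
      - x * gaussPDF x) atBot (nhds 0) := by
    simpa using ((tendsto_stdGaussCDF_atBot.const_mul (1 + w ^ 2)).add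
      (tendsto_gaussPDF_atBot.const_mul (2 * w))).sub tendsto_mul_gaussPDF_atBot
  have h := hm.le_of_tendsto hl w
  linarith

/-- The Mills ratio of the lower Gaussian tail. -/
noncomputable def millsRatio (w : ℝ) : ℝ := stdGaussCDF w / gaussPDF w

lemma millsRatio_nonneg (w : ℝ) : 0 ≤ millsRatio w :=
  div_nonneg (stdGaussCDF_nonneg w) (gaussPDF_pos w).le

lemma hasDerivAt_millsRatio (w : ℝ) : HasDerivAt millsRatio (1 + w * millsRatio w) w := by
  have hp := (gaussPDF_pos w).ne'
  refine ((hasDerivAt_stdGaussCDF w).div (hasDerivAt_gaussPDF w) hp).congr_deriv ?_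
  rw [millsRatio]
  field_simp
  ring

lemma neg_mul_millsRatio_le_one (w : ℝ) : -(w * millsRatio w) ≤ 1 := by
  have := mul_stdGaussCDF_add_gaussPDF_nonneg w
  rw [millsRatio, ← mul_div_assoc, ← neg_div, div_le_one (gaussPDF_pos w)]
  linarith

lemma monotone_mul_millsRatio : Monotone fun w => w * millsRatio w := by
  have hd : ∀ w, HasDerivAt (fun w => w * millsRatio w)
      (1 * millsRatio w + w * (1 + w * millsRatio w)) w := fun w =>
    (hasDerivAt_id w).mul (hasDerivAt_millsRatio w)
  refine monotone_of_deriv_nonneg (fun w => (hd w).differentiableAt) fun w => ?_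
  rw [(hd w).deriv]
  have hp := gaussPDF_pos w
  have : 1 * millsRatio w + w * (1 + w * millsRatio w)
      = ((1 + w ^ 2) * stdGaussCDF w + w * gaussPDF w) / gaussPDF w := by
    rw [millsRatio]
    field_simp
    ring
  rw [this]
  exact div_nonneg (one_add_sq_mul_stdGaussCDF_add_nonneg w) hp.le

lemma one_sub_mul_millsRatio (w : ℝ) :
    (1 - stdGaussCDF w) * millsRatio w = stdGaussCDF w * millsRatio (-w) := by
  rw [millsRatio, millsRatio, stdGaussCDF_neg, gaussPDF_neg]
  ring

/-- The bounded solution of Stein's equation for the half line `(-∞, z]`. -/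
noncomputable def steinSol (z w : ℝ) : ℝ :=
  if w ≤ z then (1 - stdGaussCDF z) * millsRatio w else stdGaussCDF z * millsRatio (-w)

lemma continuous_millsRatio : Continuous millsRatio :=
  continuous_iff_continuousAt.2 fun w => (hasDerivAt_millsRatio w).continuousAt

lemma continuous_steinSol (z : ℝ) : Continuous (steinSol z) := by
  refine Continuous.if_le (continuous_const.mul continuous_millsRatio)
    (continuous_const.mul (continuous_millsRatio.comp continuous_neg)) continuous_id
    continuous_const fun w hw => ?_
  rw [show w = z from hw, one_sub_mul_millsRatio]

lemma steinSol_of_ge {z w : ℝ} (h : z ≤ w) : steinSol z w = stdGaussCDF z * millsRatio (-w) := by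
  rcases h.eq_or_lt with rfl | h
  · rw [steinSol, if_pos le_rfl, one_sub_mul_millsRatio]
  · rw [steinSol, if_neg h.not_ge]

lemma steinSol_of_le {z w : ℝ} (h : w ≤ z) : steinSol z w = (1 - stdGaussCDF z) * millsRatio w :=
  if_pos h

lemma monotone_mul_steinSol (z : ℝ) : Monotone fun w => w * steinSol z w := by
  refine MonotoneOn.Iic_union_Ici (a := z) (fun x hx y hy hxy => ?_) fun x hx y hy hxy => ?_
  · simp only [steinSol_of_le hx, steinSol_of_le hy]
    have := mul_le_mul_of_nonneg_left (monotone_mul_millsRatio hxy)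
      (sub_nonneg.2 (stdGaussCDF_le_one z))
    simp only at this
    linarith
  · simp only [steinSol_of_ge hx, steinSol_of_ge hy]
    have := mul_le_mul_of_nonneg_left (monotone_mul_millsRatio (neg_le_neg hxy))
      (stdGaussCDF_nonneg z)
    simp only at this
    linarith

lemma abs_mul_steinSol_le_one (z w : ℝ) : |w * steinSol z w| ≤ 1 := by
  have key : ∀ a b : ℝ, 0 ≤ b → b ≤ 1 - stdGaussCDF a → |a * (b * millsRatio a)| ≤ 1 := by
    intro a b hb hba
    have hR := millsRatio_nonneg a
    have h1 := neg_mul_millsRatio_le_one a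
    have h2 := neg_mul_millsRatio_le_one (-a)
    have h3 := one_sub_mul_millsRatio a
    have hΦ0 := stdGaussCDF_nonneg a
    have hΦ1 := stdGaussCDF_le_one a
    rw [abs_le]
    rcases le_total 0 a with ha | ha
    · constructor
      · have := mul_nonneg ha (mul_nonneg hb hR)
        linarith
      · calc a * (b * millsRatio a) ≤ a * ((1 - stdGaussCDF a) * millsRatio a) := by gcongr
          _ = stdGaussCDF a * (-(-a * millsRatio (-a))) := by rw [h3]; ring
          _ ≤ 1 * 1 := by
            apply mul_le_mul hΦ1 h2 _ zero_le_one
            have := mul_nonneg ha (millsRatio_nonneg (-a))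
            linarith
          _ = 1 := one_mul 1
    · constructor
      · have hb1 : b ≤ 1 := by linarith
        have h4 : 0 ≤ -(a * millsRatio a) := by
          have := mul_nonneg (neg_nonneg.2 ha) hR
          linarith
        have := mul_le_mul hb1 h1 h4 zero_le_one
        linarith
      · have := mul_nonneg (neg_nonneg.2 ha) (mul_nonneg hb hR)
        linarith
  rcases le_total w z with h | h
  · rw [steinSol_of_le h]
    exact key w _ (sub_nonneg.2 (stdGaussCDF_le_one z))
      (by have := monotone_stdGaussCDF h; linarith)
  · rw [steinSol_of_ge h]
    have := key (-w) (stdGaussCDF z) (stdGaussCDF_nonneg z)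
      (by rw [stdGaussCDF_neg]; have := monotone_stdGaussCDF h; linarith)
    rwa [neg_mul, abs_neg] at this

lemma hasDerivAt_steinSol_sub_min (z w : ℝ) :
    HasDerivAt (fun w => steinSol z w - min w z + stdGaussCDF z * w) (w * steinSol z w) w := by
  have hne : ∀ y ≠ z, HasDerivAt (fun w => steinSol z w - min w z + stdGaussCDF z * w)
      (y * steinSol z y) y := by
    intro y hy
    rcases hy.lt_or_gt with hy | hy
    · have h := (((hasDerivAt_millsRatio y).const_mul (1 - stdGaussCDF z)).sub
        (hasDerivAt_id y)).add ((hasDerivAt_id y).const_mul (stdGaussCDF z))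
      rw [steinSol_of_le hy.le]
      refine (h.congr_of_eventuallyEq ?_).congr_deriv (by ring)
      filter_upwards [Iio_mem_nhds hy] with x hx
      simp [steinSol_of_le (Set.mem_Iio.1 hx).le, (Set.mem_Iio.1 hx).le]
    · have h1 : HasDerivAt (fun x => millsRatio (-x)) (-(1 + -y * millsRatio (-y))) y := by
        have := (hasDerivAt_millsRatio (-y)).comp y (hasDerivAt_neg y)
        simpa [Function.comp_def] using this
      have h := ((h1.const_mul (stdGaussCDF z)).sub
        (hasDerivAt_const y z)).add ((hasDerivAt_id y).const_mul (stdGaussCDF z))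
      rw [steinSol_of_ge hy.le]
      refine (h.congr_of_eventuallyEq ?_).congr_deriv (by ring)
      filter_upwards [Ioi_mem_nhds hy] with x hx
      simp [steinSol_of_ge (Set.mem_Ioi.1 hx).le, (Set.mem_Ioi.1 hx).le]
  by_cases hw : w = z
  · subst hw
    have hc := continuous_steinSol w
    refine hasDerivAt_of_hasDerivAt_of_ne hne ?_ ?_
    · exact Continuous.continuousAt (by fun_prop)
    · exact Continuous.continuousAt (continuous_id.mul hc)
  · exact hne w hw

/-- First order expansion of the Stein solution, with remainder controlled by the increments
of the two monotone parts of its derivative. -/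
lemma abs_steinSol_sub_sub_le (z a b : ℝ) :
    |steinSol z b - steinSol z a
        - (a * steinSol z a + (if a ≤ z then 1 else 0) - stdGaussCDF z) * (b - a)|
      ≤ (b - a) * ((b * steinSol z b - if b ≤ z then 1 else 0)
          - (a * steinSol z a - if a ≤ z then 1 else 0)) := by
  set F := fun w => steinSol z w - min w z + stdGaussCDF z * w with hF
  set k := fun w => w * steinSol z w with hk
  have hmono : Monotone k := monotone_mul_steinSol z
  have hconv : ∀ x y : ℝ, k x * (y - x) ≤ F y - F x := by
    intro x y
    rcases lt_trichotomy x y with hxy | rfl | hxy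
    · obtain ⟨c, hc, hce⟩ := exists_hasDerivAt_eq_slope F k hxy
        (fun t _ => (hasDerivAt_steinSol_sub_min z t).continuousAt.continuousWithinAt)
        (fun t _ => hasDerivAt_steinSol_sub_min z t)
      rw [eq_div_iff (by linarith)] at hce
      rw [← hce]
      exact mul_le_mul_of_nonneg_right (hmono hc.1.le) (by linarith)
    · simp
    · obtain ⟨c, hc, hce⟩ := exists_hasDerivAt_eq_slope F k hxy
        (fun t _ => (hasDerivAt_steinSol_sub_min z t).continuousAt.continuousWithinAt)
        (fun t _ => hasDerivAt_steinSol_sub_min z t)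
      rw [eq_div_iff (by linarith)] at hce
      have := mul_le_mul_of_nonneg_right (hmono hc.2.le) (by linarith : (0 : ℝ) ≤ x - y)
      linarith
  have h1 := hconv a b
  have h2 := hconv b a
  simp only [hF, hk] at h1 h2
  have hmin : (b - a) * ((if b ≤ z then 1 else 0) - (if a ≤ z then (1 : ℝ) else 0))
      ≤ min b z - min a z - (if a ≤ z then 1 else 0) * (b - a)
      ∧ min b z - min a z - (if a ≤ z then (1 : ℝ) else 0) * (b - a) ≤ 0 := by
    rcases le_total a z with ha | ha <;> rcases le_total b z with hb | hb <;>
      simp only [min_eq_left, min_eq_right, ha, hb] <;> split_ifs <;>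
      constructor <;> nlinarith
  rw [abs_le]
  constructor <;> nlinarith [hmin.1, hmin.2]

section Reversible

variable {Ω ι : Type*} [Fintype Ω] [Fintype ι]

/-- Variance of `f` under the uniform distribution on a finite type. -/
noncomputable def uniformVar (f : Ω → ℝ) : ℝ := 𝔼 x, (f x - 𝔼 y, f y) ^ 2

/-- A family of moves `x ↦ s x i` is reversible if a uniform point together with its image
under a uniform move forms an exchangeable pair. -/
def ReversibleMoves (s : Ω → ι → Ω) : Prop :=
  ∀ H : Ω → Ω → ℝ, ∑ x, ∑ i, H x (s x i) = ∑ x, ∑ i, H (s x i) x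

lemma ReversibleMoves.expect {s : Ω → ι → Ω} (hs : ReversibleMoves s) (H : Ω → Ω → ℝ) :
    𝔼 x, ∑ i, H x (s x i) = 𝔼 x, ∑ i, H (s x i) x := by
  simp only [Finset.expect_eq_sum_div_card, hs H]

/-- Summation by parts for reversible moves. -/
lemma ReversibleMoves.expect_sub_mul {s : Ω → ι → Ω} (hs : ReversibleMoves s) (f g : Ω → ℝ) :
    𝔼 x, ∑ i, (f x - f (s x i)) * (g x - g (s x i))
      = 2 * 𝔼 x, (∑ i, (f x - f (s x i))) * g x := by
  have h := hs.expect fun x y => (f x - f y) * g x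
  have e : ∀ x, ∑ i, (f x - f (s x i)) * (g x - g (s x i))
      = ∑ i, (f x - f (s x i)) * g x + ∑ i, (f (s x i) - f x) * g (s x i) := fun x => by
    rw [← Finset.sum_add_distrib]
    exact Finset.sum_congr rfl fun i _ => by ring
  simp only [e, Finset.sum_mul, Finset.expect_add_distrib]
  rw [← h]
  ring

variable [Nonempty Ω]

lemma expect_abs_le_sqrt (f : Ω → ℝ) : 𝔼 x, |f x| ≤ Real.sqrt (𝔼 x, f x ^ 2) := by
  apply Real.le_sqrt_of_sq_le
  have := Finset.expect_mul_sq_le_sq_mul_sq Finset.univ (fun x => |f x|) (fun _ => 1)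
  simpa using this

lemma expect_abs_sub_le_sqrt_uniformVar (f : Ω → ℝ) :
    𝔼 x, |f x - 𝔼 y, f y| ≤ Real.sqrt (uniformVar f) :=
  expect_abs_le_sqrt fun x => f x - 𝔼 y, f y

/-- Stein's method with an antisymmetric functional of an exchangeable pair: Kolmogorov bound
in terms of conditional first and second moments of the increments. -/
theorem ReversibleMoves.abs_expect_sub_stdGaussCDF_le {s : Ω → ι → Ω} (hs : ReversibleMoves s)
    {Y G : Ω → ℝ} {μ V K : ℝ} (hV : 0 < V) (hG : ∀ x, ∑ i, (G x - G (s x i)) = Y x - μ)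
    (hK : ∀ x i, |G x - G (s x i)| ≤ K) (z : ℝ) :
    |(𝔼 x, if (Y x - μ) / Real.sqrt V ≤ z then (1 : ℝ) else 0) - stdGaussCDF z|
      ≤ ((𝔼 x, |2 * V - ∑ i, (G x - G (s x i)) * (Y x - Y (s x i))|)
          + 2 * K * 𝔼 x, |∑ i, (Y x - Y (s x i))|) / V := by
  set σ := Real.sqrt V with hσdef
  have hσ : 0 < σ := Real.sqrt_pos.2 hV
  have hσ2 : σ * σ = V := Real.mul_self_sqrt hV.le
  set W : Ω → ℝ := fun x => (Y x - μ) / σ with hW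
  have hWY : ∀ x, σ * W x = Y x - μ := fun x => by
    simp only [hW]; field_simp
  set f := steinSol z
  set ind : ℝ → ℝ := fun a => if a ≤ z then 1 else 0 with hind
  set κ : ℝ → ℝ := fun a => a * f a - ind a with hκ
  set f' : ℝ → ℝ := fun a => a * f a + ind a - stdGaussCDF z with hf'
  have hind0 : ∀ a, 0 ≤ ind a ∧ ind a ≤ 1 := fun a => by
    simp only [hind]; split_ifs <;> norm_num
  have hκ2 : ∀ a, |κ a| ≤ 2 := fun a => by
    have h1 := abs_le.1 (abs_mul_steinSol_le_one z a)
    have h2 := hind0 a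
    rw [abs_le]; constructor <;> simp only [hκ] <;> linarith [h1.1, h1.2, h2.1, h2.2]
  have hf'2 : ∀ a, |f' a| ≤ 2 := fun a => by
    have h1 := abs_le.1 (abs_mul_steinSol_le_one z a)
    have h2 := hind0 a
    have h3 := stdGaussCDF_nonneg z
    have h4 := stdGaussCDF_le_one z
    rw [abs_le]; constructor <;> simp only [hf'] <;> linarith [h1.1, h1.2, h2.1, h2.2]
  set rem : Ω → Ω → ℝ := fun x y => f (W y) - f (W x) - f' (W x) * (W y - W x) with hrem
  have hremle : ∀ x y, |rem x y| ≤ (W y - W x) * (κ (W y) - κ (W x)) := fun x y =>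
    abs_steinSol_sub_sub_le z (W x) (W y)
  -- the remainder
  have hR : |𝔼 x, ∑ i, (G x - G (s x i)) * rem x (s x i)|
      ≤ 4 * K / σ * 𝔼 x, |∑ i, (Y x - Y (s x i))| := by
    calc |𝔼 x, ∑ i, (G x - G (s x i)) * rem x (s x i)|
        ≤ 𝔼 x, ∑ i, K * ((W x - W (s x i)) * (κ (W x) - κ (W (s x i)))) := by
          refine (Finset.abs_expect_le _ _).trans (Finset.expect_le_expect fun x _ => ?_)
          refine (Finset.abs_sum_le_sum_abs _ _).trans (Finset.sum_le_sum fun i _ => ?_)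
          rw [abs_mul]
          have h1 := hremle x (s x i)
          have h0 : 0 ≤ K := (abs_nonneg _).trans (hK x i)
          calc _ ≤ K * ((W (s x i) - W x) * (κ (W (s x i)) - κ (W x))) :=
                mul_le_mul (hK x i) h1 (abs_nonneg _) h0
            _ = _ := by ring
      _ = 2 * K * 𝔼 x, (∑ i, (W x - W (s x i))) * κ (W x) := by
          have := hs.expect_sub_mul W fun x => κ (W x)
          simp only [← Finset.mul_sum, ← Finset.mul_expect, this]
          ring
      _ ≤ 2 * K * 𝔼 x, |∑ i, (Y x - Y (s x i))| / σ * 2 := by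
          rcases isEmpty_or_nonempty ι with hι | hι
          · simp
          have h0 : 0 ≤ K :=
            (abs_nonneg _).trans (hK (Classical.arbitrary Ω) (Classical.arbitrary ι))
          refine mul_le_mul_of_nonneg_left (Finset.expect_le_expect fun x _ => ?_) (by positivity)
          have e : ∑ i, (W x - W (s x i)) = (∑ i, (Y x - Y (s x i))) / σ := by
            rw [Finset.sum_div]
            exact Finset.sum_congr rfl fun i _ => by simp only [hW]; ring
          rw [e]
          refine (le_abs_self _).trans ?_
          rw [abs_mul, abs_div, abs_of_pos hσ]
          exact mul_le_mul_of_nonneg_left (hκ2 _) (by positivity)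
      _ = _ := by
          rw [← Finset.expect_mul, ← Finset.expect_div]
          ring
  -- the main identity
  have hmain : 2 * V * 𝔼 x, (ind (W x) - stdGaussCDF z)
      = 𝔼 x, f' (W x) * (2 * V - ∑ i, (G x - G (s x i)) * (Y x - Y (s x i)))
        + σ * 𝔼 x, ∑ i, (G x - G (s x i)) * rem x (s x i) := by
    have h1 := hs.expect_sub_mul G fun x => f (W x)
    have h2 : 𝔼 x, (∑ i, (G x - G (s x i))) * f (W x) = σ * 𝔼 x, W x * f (W x) := by
      rw [Finset.mul_expect]
      exact Finset.expect_congr rfl fun x _ => by rw [hG, ← hWY]; ring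
    have h3 : 𝔼 x, ∑ i, (G x - G (s x i)) * (f (W x) - f (W (s x i)))
        = 𝔼 x, (f' (W x) * ∑ i, (G x - G (s x i)) * (Y x - Y (s x i))) / σ
          - 𝔼 x, ∑ i, (G x - G (s x i)) * rem x (s x i) := by
      rw [← Finset.expect_sub_distrib]
      refine Finset.expect_congr rfl fun x _ => ?_
      rw [Finset.mul_sum, Finset.sum_div, ← Finset.sum_sub_distrib]
      refine Finset.sum_congr rfl fun i _ => ?_
      have : Y x - Y (s x i) = σ * (W x - W (s x i)) := by
        rw [mul_sub, hWY, hWY]; ring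
      rw [this]
      simp only [hrem]
      field_simp
      ring
    rw [h3, h2, ← Finset.expect_div] at h1
    have h4 : 𝔼 x, (ind (W x) - stdGaussCDF z) = 𝔼 x, f' (W x) - 𝔼 x, W x * f (W x) := by
      rw [← Finset.expect_sub_distrib]
      exact Finset.expect_congr rfl fun x _ => by simp only [hf']; ring
    have h5 : 𝔼 x, f' (W x) * (2 * V - ∑ i, (G x - G (s x i)) * (Y x - Y (s x i)))
        = 2 * V * 𝔼 x, f' (W x)
          - 𝔼 x, f' (W x) * ∑ i, (G x - G (s x i)) * (Y x - Y (s x i)) := by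
      rw [Finset.mul_expect, ← Finset.expect_sub_distrib]
      exact Finset.expect_congr rfl fun x _ => by ring
    rw [h4, h5, ← hσ2]
    field_simp at h1
    linarith
  have hA : |𝔼 x, f' (W x) * (2 * V - ∑ i, (G x - G (s x i)) * (Y x - Y (s x i)))|
      ≤ 2 * 𝔼 x, |2 * V - ∑ i, (G x - G (s x i)) * (Y x - Y (s x i))| := by
    rw [Finset.mul_expect]
    refine (Finset.abs_expect_le _ _).trans (Finset.expect_le_expect fun x _ => ?_)
    rw [abs_mul]
    exact mul_le_mul_of_nonneg_right (hf'2 _) (abs_nonneg _)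
  have hB : σ * |𝔼 x, ∑ i, (G x - G (s x i)) * rem x (s x i)|
      ≤ 4 * K * 𝔼 x, |∑ i, (Y x - Y (s x i))| := by
    refine (mul_le_mul_of_nonneg_left hR hσ.le).trans (le_of_eq ?_)
    field_simp
  have hE : (𝔼 x, if (Y x - μ) / σ ≤ z then (1 : ℝ) else 0) - stdGaussCDF z
      = 𝔼 x, (ind (W x) - stdGaussCDF z) := by
    rw [Finset.expect_sub_distrib, Fintype.expect_const]
  rw [hE, le_div_iff₀ hV]
  have h6 : 2 * V * |𝔼 x, (ind (W x) - stdGaussCDF z)|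
      = |2 * V * 𝔼 x, (ind (W x) - stdGaussCDF z)| := by
    rw [abs_mul, abs_of_pos (by positivity : 0 < 2 * V)]
  rw [hmain] at h6
  have h7 := abs_add_le (𝔼 x, f' (W x) * (2 * V - ∑ i, (G x - G (s x i)) * (Y x - Y (s x i))))
    (σ * 𝔼 x, ∑ i, (G x - G (s x i)) * rem x (s x i))
  rw [abs_mul σ, abs_of_pos hσ] at h7
  linarith

/-- The Stein bound with conditional moments controlled by variances. -/
theorem ReversibleMoves.abs_expect_sub_stdGaussCDF_le_sqrt {s : Ω → ι → Ω}
    (hs : ReversibleMoves s) {Y G : Ω → ℝ} {K : ℝ} (hV : 0 < uniformVar Y) (hK0 : 0 ≤ K)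
    (hG : ∀ x, ∑ i, (G x - G (s x i)) = Y x - 𝔼 y, Y y)
    (hK : ∀ x i, |G x - G (s x i)| ≤ K) (z : ℝ) :
    |(𝔼 x, if (Y x - 𝔼 y, Y y) / Real.sqrt (uniformVar Y) ≤ z then (1 : ℝ) else 0)
        - stdGaussCDF z|
      ≤ (Real.sqrt (uniformVar fun x => ∑ i, (G x - G (s x i)) * (Y x - Y (s x i)))
          + 2 * K * Real.sqrt (uniformVar fun x => ∑ i, (Y x - Y (s x i)))) / uniformVar Y := by
  refine (hs.abs_expect_sub_stdGaussCDF_le hV hG hK z).trans ?_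
  have h1 : 𝔼 x, ∑ i, (G x - G (s x i)) * (Y x - Y (s x i)) = 2 * uniformVar Y := by
    rw [hs.expect_sub_mul G Y, uniformVar]
    congr 1
    have h0 : 𝔼 x, (Y x - 𝔼 y, Y y) = 0 := by
      rw [Finset.expect_sub_distrib, Fintype.expect_const, sub_self]
    have : 𝔼 x, (Y x - 𝔼 y, Y y) ^ 2 = 𝔼 x, (∑ i, (G x - G (s x i))) * Y x
        - 𝔼 x, (Y x - 𝔼 y, Y y) * 𝔼 y, Y y := by
      rw [← Finset.expect_sub_distrib]
      exact Finset.expect_congr rfl fun x _ => by rw [hG]; ring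
    rw [this, ← Finset.expect_mul, h0]
    ring
  have h2 : 𝔼 x, ∑ i, (Y x - Y (s x i)) = 0 := by
    have h := hs.expect fun x y => Y x - Y y
    have e : 𝔼 x, ∑ i, (Y (s x i) - Y x) = - 𝔼 x, ∑ i, (Y x - Y (s x i)) := by
      rw [← Finset.expect_neg_distrib]
      refine Finset.expect_congr rfl fun x _ => ?_
      rw [← Finset.sum_neg_distrib]
      exact Finset.sum_congr rfl fun i _ => by ring
    rw [e] at h
    linarith
  have h3 := expect_abs_sub_le_sqrt_uniformVar
    fun x => ∑ i, (G x - G (s x i)) * (Y x - Y (s x i))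
  have h4 := expect_abs_sub_le_sqrt_uniformVar fun x => ∑ i, (Y x - Y (s x i))
  rw [h1] at h3
  simp only [h2, sub_zero] at h4
  simp only [abs_sub_comm _ (2 * uniformVar Y)] at h3
  gcongr

end Reversible

section EfronStein

lemma uniformVar_eq_half {Ω : Type*} [Fintype Ω] [Nonempty Ω] (f : Ω → ℝ) :
    uniformVar f = (𝔼 x, 𝔼 y, (f x - f y) ^ 2) / 2 := by
  have h1 : ∀ x, 𝔼 y, (f x - f y) ^ 2
      = f x ^ 2 - 2 * f x * (𝔼 y, f y) + 𝔼 y, f y ^ 2 := fun x => by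
    have : 𝔼 y, (f x - f y) ^ 2 = 𝔼 y, (f x ^ 2 - 2 * f x * f y + f y ^ 2) :=
      Finset.expect_congr rfl fun y _ => by ring
    rw [this, Finset.expect_add_distrib, Finset.expect_sub_distrib, Fintype.expect_const,
      ← Finset.mul_expect]
  have h2 : uniformVar f = 𝔼 x, (f x ^ 2 - 2 * f x * (𝔼 y, f y) + (𝔼 y, f y) ^ 2) :=
    Finset.expect_congr rfl fun x _ => by ring
  rw [h2]
  simp only [h1, Finset.expect_add_distrib, Finset.expect_sub_distrib, Fintype.expect_const,
    ← Finset.expect_mul, ← Finset.mul_expect]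
  ring

/-- Tensorization of the variance over two factors. -/
lemma expect_sub_sq_le_add {A B : Type*} [Fintype A] [Nonempty A] [Fintype B] [Nonempty B]
    (f : A → B → ℝ) :
    𝔼 a, 𝔼 a', 𝔼 b, 𝔼 b', (f a b - f a' b') ^ 2
      ≤ 𝔼 a, 𝔼 a', 𝔼 b, (f a b - f a' b) ^ 2 + 𝔼 a, 𝔼 b, 𝔼 b', (f a b - f a b') ^ 2 := by
  have h0 : 0 ≤ 𝔼 a, 𝔼 a', 𝔼 b, 𝔼 b', (f a b - f a' b - f a b' + f a' b') ^ 2 :=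
    Finset.expect_nonneg fun _ _ => Finset.expect_nonneg fun _ _ =>
      Finset.expect_nonneg fun _ _ => Finset.expect_nonneg fun _ _ => sq_nonneg _
  have e : ∀ a a' b b', (f a b - f a' b - f a b' + f a' b') ^ 2
      = (f a b - f a' b) ^ 2 + (f a b' - f a' b') ^ 2 + (f a b - f a b') ^ 2
        + (f a' b - f a' b') ^ 2 - (f a b - f a' b') ^ 2 - (f a' b - f a b') ^ 2 :=
    fun a a' b b' => by ring
  simp only [e, Finset.expect_add_distrib, Finset.expect_sub_distrib,
    Fintype.expect_const] at h0
  have h1 : 𝔼 a, 𝔼 a', 𝔼 b, 𝔼 b', (f a' b - f a b') ^ 2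
      = 𝔼 a, 𝔼 a', 𝔼 b, 𝔼 b', (f a b - f a' b') ^ 2 := Finset.expect_comm _ _ _
  rw [h1] at h0
  linarith

lemma expect_fin_succ_pi {α : Type*} [Fintype α] {n : ℕ} (f : (Fin (n + 1) → α) → ℝ) :
    𝔼 ω, f ω = 𝔼 a, 𝔼 ω : Fin n → α, f (Fin.cons a ω) := by
  rw [← Fintype.expect_equiv (Fin.consEquiv fun _ => α) (fun p => f (Fin.cons p.1 p.2)) f
    fun p => rfl, ← Finset.univ_product_univ, Finset.expect_product]

lemma expect_sub_sq_le_sum_update {α : Type*} [Fintype α] [Nonempty α] [DecidableEq α] (n : ℕ)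
    (f : (Fin n → α) → ℝ) :
    𝔼 ω, 𝔼 ω', (f ω - f ω') ^ 2
      ≤ ∑ b, 𝔼 ω, 𝔼 j, (f ω - f (Function.update ω b j)) ^ 2 := by
  induction n with
  | zero => simp [Subsingleton.elim _ (default : Fin 0 → α)]
  | succ n ih =>
    have h := expect_sub_sq_le_add fun (a : α) (ω : Fin n → α) =>
      f (Fin.cons a ω : Fin (n + 1) → α)
    have h2 := Finset.expect_le_expect (s := Finset.univ) fun (a : α) _ =>
      ih fun ω => f (Fin.cons a ω : Fin (n + 1) → α)
    rw [Finset.expect_sum_comm] at h2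
    simp only [expect_fin_succ_pi, Fin.sum_univ_succ, Fin.update_cons_zero, ← Fin.cons_update]
    have e1 : 𝔼 a : α, 𝔼 ω : Fin n → α, 𝔼 a' : α, 𝔼 ω' : Fin n → α,
          (f (Fin.cons a ω : Fin (n + 1) → α) - f (Fin.cons a' ω' : Fin (n + 1) → α)) ^ 2
        = 𝔼 a : α, 𝔼 a' : α, 𝔼 ω : Fin n → α, 𝔼 ω' : Fin n → α,
          (f (Fin.cons a ω : Fin (n + 1) → α) - f (Fin.cons a' ω' : Fin (n + 1) → α)) ^ 2 :=
      Finset.expect_congr rfl fun a _ => Finset.expect_comm _ _ _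
    have e2 : 𝔼 a : α, 𝔼 ω : Fin n → α, 𝔼 a' : α,
          (f (Fin.cons a ω : Fin (n + 1) → α) - f (Fin.cons a' ω : Fin (n + 1) → α)) ^ 2
        = 𝔼 a : α, 𝔼 a' : α, 𝔼 ω : Fin n → α,
          (f (Fin.cons a ω : Fin (n + 1) → α) - f (Fin.cons a' ω : Fin (n + 1) → α)) ^ 2 :=
      Finset.expect_congr rfl fun a _ => Finset.expect_comm _ _ _
    rw [e1, e2]
    exact h.trans (add_le_add le_rfl h2)

/-- The Efron–Stein inequality for the uniform distribution on a finite power. -/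
theorem uniformVar_le_sum_update {α : Type*} [Fintype α] [Nonempty α] [DecidableEq α] (n : ℕ)
    (f : (Fin n → α) → ℝ) :
    uniformVar f ≤ (𝔼 ω, ∑ b, 𝔼 j, (f ω - f (Function.update ω b j)) ^ 2) / 2 := by
  rw [uniformVar_eq_half, Finset.expect_sum_comm]
  have := expect_sub_sq_le_sum_update n f
  linarith

end EfronStein

section Moves

variable {n m : ℕ}

/-- Move ball `p.1` to urn `p.2`. -/
def ballMove (ω : Fin n → Fin m) (p : Fin n × Fin m) : Fin n → Fin m :=
  Function.update ω p.1 p.2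

lemma reversibleMoves_ballMove : ReversibleMoves (ballMove (n := n) (m := m)) := by
  intro H
  simp only [Fintype.sum_prod_type, ballMove]
  rw [Finset.sum_comm]
  conv_rhs => rw [Finset.sum_comm]
  refine Finset.sum_congr rfl fun b _ => ?_
  rw [← Fintype.sum_prod_type' fun ω j => H ω (Function.update ω b j),
    ← Fintype.sum_prod_type' fun ω j => H (Function.update ω b j) ω]
  refine Finset.sum_nbij' (fun p => (Function.update p.1 b p.2, p.1 b))
    (fun p => (Function.update p.1 b p.2, p.1 b)) (by simp) (by simp) ?_ ?_ ?_ <;>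
    simp

lemma ballCount_eq_sum (ω : Fin n → Fin m) (i : Fin m) :
    ballCount ω i = ∑ b, if ω b = i then 1 else 0 := by
  rw [ballCount, Finset.card_filter]

lemma ballCount_le (ω : Fin n → Fin m) (i : Fin m) : ballCount ω i ≤ n := by
  simpa [ballCount] using Finset.card_filter_le Finset.univ fun b => ω b = i

lemma sum_ballCount (ω : Fin n → Fin m) : ∑ i, (ballCount ω i : ℝ) = n := by
  have : ∑ i, ballCount ω i = n := by
    simp only [ballCount_eq_sum]
    rw [Finset.sum_comm]
    simp
  exact_mod_cast this

lemma ballCount_update_add (ω : Fin n → Fin m) (b : Fin n) (j i : Fin m) :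
    ballCount (Function.update ω b j) i + (if ω b = i then 1 else 0)
      = ballCount ω i + if j = i then 1 else 0 := by
  simp only [ballCount_eq_sum]
  rw [← Finset.add_sum_erase _ _ (Finset.mem_univ b),
    ← Finset.add_sum_erase (a := b) _ (fun c => if ω c = i then 1 else 0) (Finset.mem_univ b)]
  have : ∑ c ∈ Finset.univ.erase b, (if Function.update ω b j c = i then 1 else 0)
      = ∑ c ∈ Finset.univ.erase b, if ω c = i then 1 else 0 :=
    Finset.sum_congr rfl fun c hc => by
      rw [Function.update_of_ne (Finset.ne_of_mem_erase hc)]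
  rw [this, Function.update_self]
  ring

lemma ballCount_update_of_ne {ω : Fin n → Fin m} {b : Fin n} {j i : Fin m} (h1 : ω b ≠ i)
    (h2 : j ≠ i) : ballCount (Function.update ω b j) i = ballCount ω i := by
  simpa [h1, h2] using ballCount_update_add ω b j i

lemma ballCount_update_target {ω : Fin n → Fin m} {b : Fin n} {j : Fin m} (h : ω b ≠ j) :
    ballCount (Function.update ω b j) j = ballCount ω j + 1 := by
  simpa [h] using ballCount_update_add ω b j j

lemma ballCount_update_source {ω : Fin n → Fin m} {b : Fin n} {j : Fin m} (h : ω b ≠ j) :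
    ballCount (Function.update ω b j) (ω b) + 1 = ballCount ω (ω b) := by
  simpa [h.symm] using ballCount_update_add ω b j (ω b)

/-- The additive functional of the urn counts with summand `φ`. -/
noncomputable def urnSum (φ : ℕ → ℝ) (ω : Fin n → Fin m) : ℝ := ∑ i, φ (ballCount ω i)

lemma urnSum_sub_update (φ : ℕ → ℝ) {ω : Fin n → Fin m} {b : Fin n} {j : Fin m} (h : ω b ≠ j) :
    urnSum φ ω - urnSum φ (Function.update ω b j)
      = (φ (ballCount ω (ω b) - 1 + 1) - φ (ballCount ω (ω b) - 1))
        - (φ (ballCount ω j + 1) - φ (ballCount ω j)) := by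
  have hs := ballCount_update_source h
  have ht := ballCount_update_target h
  simp only [urnSum]
  rw [← Finset.sum_sub_distrib, ← Finset.add_sum_erase _ _ (Finset.mem_univ (ω b)),
    ← Finset.add_sum_erase _ _ (Finset.mem_erase.2 ⟨h.symm, Finset.mem_univ j⟩),
    Finset.sum_eq_zero, ht, ← hs]
  · simp only [Nat.add_sub_cancel]
    ring
  · intro i hi
    simp only [Finset.mem_erase] at hi
    rw [ballCount_update_of_ne hi.2.1.symm hi.1.symm, sub_self]

lemma sum_apply_ball (ω : Fin n → Fin m) (F : Fin m → ℝ) :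
    ∑ b, F (ω b) = ∑ i, ballCount ω i * F i := by
  have : ∀ i, (ballCount ω i : ℝ) * F i = ∑ b, if ω b = i then F i else 0 := fun i => by
    rw [ballCount_eq_sum, Nat.cast_sum, Finset.sum_mul]
    exact Finset.sum_congr rfl fun b _ => by split_ifs <;> simp
  simp only [this]
  rw [Finset.sum_comm]
  simp

/-- Sum over all moves of a function of the source and target counts. -/
lemma sum_ballMove (ω : Fin n → Fin m) (f : (Fin n × Fin m) → ℝ) (F : ℕ → ℕ → ℝ)
    (h0 : ∀ p, ω p.1 = p.2 → f p = 0)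
    (h1 : ∀ p, ω p.1 ≠ p.2 → f p = F (ballCount ω (ω p.1)) (ballCount ω p.2)) :
    ∑ p, f p = (∑ i, ∑ j, ballCount ω i * F (ballCount ω i) (ballCount ω j))
      - ∑ i, ballCount ω i * F (ballCount ω i) (ballCount ω i) := by
  have hf : ∀ b j, f (b, j) = F (ballCount ω (ω b)) (ballCount ω j)
      - if ω b = j then F (ballCount ω j) (ballCount ω j) else 0 := fun b j => by
    split_ifs with h
    · rw [h0 (b, j) h, h, sub_self]
    · rw [h1 (b, j) h, sub_zero]
  rw [Fintype.sum_prod_type]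
  simp only [hf, Finset.sum_sub_distrib, Finset.sum_ite_eq, Finset.mem_univ, if_true]
  rw [sum_apply_ball ω fun i => ∑ j, F (ballCount ω i) (ballCount ω j),
    sum_apply_ball ω fun i => F (ballCount ω i) (ballCount ω i)]
  simp only [Finset.mul_sum]

lemma ballMove_of_eq {ω : Fin n → Fin m} {p : Fin n × Fin m} (h : ω p.1 = p.2) :
    ballMove ω p = ω := by
  rw [ballMove, ← h, Function.update_eq_self]

/-- Forward difference. -/
def fwd (φ : ℕ → ℝ) (k : ℕ) : ℝ := φ (k + 1) - φ k

/-- The generator of the ball moves acting on additive functionals. -/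
lemma sum_urnSum_sub_ballMove (φ : ℕ → ℝ) (ω : Fin n → Fin m) :
    ∑ p, (urnSum φ ω - urnSum φ (ballMove ω p))
      = urnSum (fun k => (m - 1) * k * fwd φ (k - 1) - (n - k) * fwd φ k) ω := by
  rw [sum_ballMove ω _ (fun a c => fwd φ (a - 1) - fwd φ c)
    (fun p h => by rw [ballMove_of_eq h, sub_self])
    fun p h => by rw [ballMove, urnSum_sub_update φ h]; rfl]
  simp only [mul_sub, Finset.sum_sub_distrib, ← Finset.mul_sum, ← Finset.sum_mul, sum_ballCount,
    Finset.sum_const, Finset.card_univ, Fintype.card_fin, nsmul_eq_mul, urnSum, sub_mul, mul_assoc,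
    one_mul]
  simp only [mul_left_comm _ (m : ℝ), ← Finset.mul_sum]
  ring

/-- The carré du champ of two additive functionals. -/
lemma sum_urnSum_sub_mul_sub (φ χ : ℕ → ℝ) (ω : Fin n → Fin m) :
    ∑ p, (urnSum φ ω - urnSum φ (ballMove ω p)) * (urnSum χ ω - urnSum χ (ballMove ω p))
      = urnSum (fun k => m * (k * fwd φ (k - 1) * fwd χ (k - 1)) + n * (fwd φ k * fwd χ k)
          - k * ((fwd φ (k - 1) - fwd φ k) * (fwd χ (k - 1) - fwd χ k))) ω
        - urnSum (fwd φ) ω * urnSum (fun k => k * fwd χ (k - 1)) ω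
        - urnSum (fun k => k * fwd φ (k - 1)) ω * urnSum (fwd χ) ω := by
  rw [sum_ballMove ω _ (fun a c => (fwd φ (a - 1) - fwd φ c) * (fwd χ (a - 1) - fwd χ c))
    (fun p h => by rw [ballMove_of_eq h, sub_self, zero_mul])
    fun p h => by rw [ballMove, urnSum_sub_update φ h, urnSum_sub_update χ h]; rfl]
  have e : ∀ a c : ℕ, (a : ℝ) * ((fwd φ (a - 1) - fwd φ c) * (fwd χ (a - 1) - fwd χ c))
      = a * fwd φ (a - 1) * fwd χ (a - 1) + a * (fwd φ c * fwd χ c)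
        - fwd φ c * (a * fwd χ (a - 1)) - a * fwd φ (a - 1) * fwd χ c := fun a c => by ring
  simp only [e, Finset.sum_sub_distrib, Finset.sum_add_distrib, ← Finset.mul_sum,
    ← Finset.sum_mul, sum_ballCount, Finset.sum_const, Finset.card_univ, Fintype.card_fin,
    nsmul_eq_mul, urnSum]
  simp only [mul_left_comm _ (m : ℝ), ← Finset.mul_sum]
  ring

lemma abs_urnSum_sub_ballMove_le {φ : ℕ → ℝ} {c : ℝ} (hc : ∀ k, |fwd φ k| ≤ c)
    (ω : Fin n → Fin m) (p : Fin n × Fin m) : |urnSum φ ω - urnSum φ (ballMove ω p)| ≤ 2 * c := by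
  have h0 : 0 ≤ c := (abs_nonneg _).trans (hc 0)
  by_cases h : ω p.1 = p.2
  · rw [ballMove_of_eq h, sub_self, abs_zero]; positivity
  · rw [ballMove, urnSum_sub_update φ h]
    refine (abs_sub _ _).trans ?_
    have h1 := hc (ballCount ω (ω p.1) - 1)
    have h2 := hc (ballCount ω p.2)
    simp only [fwd] at h1 h2
    linarith

/-- The probability that a given urn contains exactly `k` balls. -/
noncomputable def urnProb (n m k : ℕ) : ℝ :=
  (𝔼 ω : Fin n → Fin m, urnSum (fun l => if l = k then 1 else 0) ω) / m

lemma urnProb_nonneg (k : ℕ) : 0 ≤ urnProb n m k := by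
  refine div_nonneg (Finset.expect_nonneg fun ω _ => Finset.sum_nonneg fun i _ => ?_) (by simp)
  dsimp only
  split_ifs <;> norm_num

lemma urnProb_of_lt {k : ℕ} (hk : n < k) : urnProb n m k = 0 := by
  have : ∀ ω : Fin n → Fin m, urnSum (fun l => if l = k then 1 else 0) ω = 0 := fun ω =>
    Finset.sum_eq_zero fun i _ => if_neg ((ballCount_le ω i).trans_lt hk).ne
  simp [urnProb, this]

lemma expect_urnSum (hm : 0 < m) (φ : ℕ → ℝ) :
    𝔼 ω : Fin n → Fin m, urnSum φ ω = m * ∑ k ∈ Finset.range (n + 1), urnProb n m k * φ k := by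
  have e : ∀ ω : Fin n → Fin m, urnSum φ ω
      = ∑ k ∈ Finset.range (n + 1), urnSum (fun l => if l = k then 1 else 0) ω * φ k := by
    intro ω
    simp only [urnSum, Finset.sum_mul]
    rw [Finset.sum_comm]
    refine Finset.sum_congr rfl fun i _ => ?_
    simp [Nat.lt_succ_iff.2 (ballCount_le ω i)]
  simp only [e, Finset.expect_sum_comm, ← Finset.expect_mul, urnProb, Finset.mul_sum]
  refine Finset.sum_congr rfl fun k _ => ?_
  have : (m : ℝ) ≠ 0 := by positivity
  field_simp

lemma sum_urnProb (hm : 0 < m) : ∑ k ∈ Finset.range (n + 1), urnProb n m k = 1 := by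
  have h := expect_urnSum (n := n) hm fun _ => 1
  have : Nonempty (Fin m) := ⟨⟨0, hm⟩⟩
  have hm' : (m : ℝ) ≠ 0 := by positivity
  simpa [urnSum, hm'] using h

/-- Detailed balance for the urn counts. -/
lemma urnProb_succ (hm : 0 < m) (k : ℕ) :
    (m - 1) * (k + 1) * urnProb n m (k + 1) = (n - k) * urnProb n m k := by
  have hm' : (m : ℝ) ≠ 0 := by positivity
  set φ : ℕ → ℝ := fun l => if k + 1 ≤ l then 1 else 0 with hφ
  have hfwd : ∀ l, fwd φ l = if l = k then 1 else 0 := fun l => by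
    simp only [fwd, hφ]
    rcases lt_trichotomy l k with h | h | h
    · rw [if_neg (by omega), if_neg (by omega), if_neg h.ne, sub_zero]
    · rw [if_pos (by omega), if_neg (by omega), if_pos h, sub_zero]
    · rw [if_pos (by omega), if_pos (by omega), if_neg h.ne', sub_self]
  have h := reversibleMoves_ballMove.expect_sub_mul (urnSum (n := n) (m := m) φ) fun _ => 1
  simp only [sub_self, mul_zero, mul_one, Finset.sum_const_zero, Finset.expect_const_zero,
    sum_urnSum_sub_ballMove, hfwd] at h
  have e : ∀ ω : Fin n → Fin m, urnSum (fun l => (m - 1) * l * (if l - 1 = k then (1 : ℝ) else 0)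
      - (n - l) * if l = k then 1 else 0) ω
      = (m - 1) * (k + 1) * urnSum (fun l => if l = k + 1 then 1 else 0) ω
        - (n - k) * urnSum (fun l => if l = k then 1 else 0) ω := fun ω => by
    simp only [urnSum, Finset.mul_sum, ← Finset.sum_sub_distrib]
    refine Finset.sum_congr rfl fun i _ => ?_
    generalize ballCount ω i = l
    congr 1
    · rcases l with _ | l
      · simp
      · by_cases hl : l = k <;> simp [hl]
    · by_cases hl : l = k <;> simp [hl]
  simp only [e, Finset.expect_sub_distrib, ← Finset.mul_expect] at h
  simp only [urnProb]
  field_simp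
  linarith

end Moves

section SteinUrn

variable {n m : ℕ}

lemma urnProb_succ_eq (hm : 2 ≤ m) (k : ℕ) :
    urnProb n m (k + 1) = (n - k) / ((m - 1) * (k + 1)) * urnProb n m k := by
  have hm' : (2 : ℝ) ≤ m := by exact_mod_cast hm
  have h1 : (0 : ℝ) < (m - 1) * (k + 1) := mul_pos (by linarith) (by positivity)
  rw [div_mul_eq_mul_div, eq_div_iff h1.ne', ← urnProb_succ (by omega)]
  ring

lemma urnProb_pos (hm : 2 ≤ m) {k : ℕ} (hk : k ≤ n) : 0 < urnProb n m k := by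
  have hm' : (2 : ℝ) ≤ m := by exact_mod_cast hm
  induction k with
  | zero =>
    refine (urnProb_nonneg 0).lt_of_ne fun h => ?_
    have hz : ∀ k, urnProb n m k = 0 := fun k => by
      induction k with
      | zero => exact h.symm
      | succ k ih => rw [urnProb_succ_eq hm, ih, mul_zero]
    have := sum_urnProb (n := n) (m := m) (by omega)
    simp [hz] at this
  | succ k ih =>
    have hk' : (k : ℝ) + 1 ≤ n := by exact_mod_cast hk
    rw [urnProb_succ_eq hm]
    exact mul_pos (div_pos (by linarith) (mul_pos (by linarith) (by positivity))) (ih (by omega))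

lemma sum_urnProb_le_one (hm : 0 < m) (s : Finset ℕ) : ∑ k ∈ s, urnProb n m k ≤ 1 := by
  have h : ∑ k ∈ s, urnProb n m k ≤ ∑ k ∈ s ∪ Finset.range (n + 1), urnProb n m k :=
    Finset.sum_le_sum_of_subset_of_nonneg Finset.subset_union_left fun k _ _ => urnProb_nonneg k
  refine h.trans_eq ?_
  rw [← sum_urnProb (n := n) hm]
  refine (Finset.sum_subset Finset.subset_union_right fun k _ hk => urnProb_of_lt ?_).symm
  simpa using hk

lemma urnProb_mul_le (hm : 2 ≤ m) {l r : ℕ} (hlr : l ≤ r) (s : ℕ) :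
    urnProb n m l * urnProb n m (r + s) ≤ urnProb n m (l + s) * urnProb n m r := by
  have hm' : (2 : ℝ) ≤ m := by exact_mod_cast hm
  induction s with
  | zero => rfl
  | succ s ih =>
    rcases le_or_gt n (r + s) with h | h
    · rw [urnProb_of_lt (k := r + (s + 1)) (by omega), mul_zero]
      exact mul_nonneg (urnProb_nonneg _) (urnProb_nonneg _)
    · have hlr' : (l : ℝ) ≤ r := by exact_mod_cast hlr
      have h' : (r : ℝ) + s ≤ n := by exact_mod_cast h.le
      rw [← add_assoc, ← add_assoc, urnProb_succ_eq hm, urnProb_succ_eq hm]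
      push_cast
      have hρ : ((n : ℝ) - (r + s)) / ((m - 1) * (r + s + 1))
          ≤ (n - (l + s)) / ((m - 1) * (l + s + 1)) := by
        have : (0 : ℝ) < m - 1 := by linarith
        gcongr
        linarith
      have hl : 0 ≤ ((n : ℝ) - (l + s)) / ((m - 1) * (l + s + 1)) :=
        div_nonneg (by linarith) (mul_nonneg (by linarith) (by positivity))
      calc urnProb n m l * (((n : ℝ) - (r + s)) / ((m - 1) * (r + s + 1)) * urnProb n m (r + s))
          = ((n : ℝ) - (r + s)) / ((m - 1) * (r + s + 1))
            * (urnProb n m l * urnProb n m (r + s)) := by ring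
        _ ≤ (n - (l + s)) / ((m - 1) * (l + s + 1)) * (urnProb n m (l + s) * urnProb n m r) :=
          mul_le_mul hρ ih (mul_nonneg (urnProb_nonneg _) (urnProb_nonneg _)) hl
        _ = _ := by ring

/-- Cumulative centred weights of the point `d` under the law of an urn count. -/
noncomputable def urnCumul (n m d k : ℕ) : ℝ :=
  ∑ l ∈ Finset.range (k + 1), ((if l = d then 1 else 0) - urnProb n m d) * urnProb n m l

lemma urnCumul_of_lt {d k : ℕ} (hk : k < d) :
    urnCumul n m d k = -∑ l ∈ Finset.range (k + 1), urnProb n m l * urnProb n m d := by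
  rw [urnCumul, ← Finset.sum_neg_distrib]
  refine Finset.sum_congr rfl fun l hl => ?_
  have := Finset.mem_range.1 hl
  rw [if_neg (by omega)]
  ring

lemma urnCumul_of_ge {d k : ℕ} (hm : 0 < m) (hk : d ≤ k) (hkn : k ≤ n) :
    urnCumul n m d k = ∑ t ∈ Finset.range (n - k), urnProb n m d * urnProb n m (k + 1 + t) := by
  have h := sum_urnProb (n := n) hm
  rw [show n + 1 = k + 1 + (n - k) by omega, Finset.sum_range_add] at h
  rw [urnCumul, ← Finset.mul_sum]
  simp only [sub_mul, Finset.sum_sub_distrib, ← Finset.mul_sum, ite_mul, one_mul, zero_mul]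
  rw [Finset.sum_ite_eq', if_pos (Finset.mem_range.2 (by omega))]
  linear_combination (-urnProb n m d) * h

lemma abs_urnCumul_le (hm : 2 ≤ m) {d k : ℕ} (hkn : k ≤ n) :
    |urnCumul n m d k| ≤ urnProb n m (k + 1) := by
  rcases lt_or_ge k d with hk | hk
  · rw [urnCumul_of_lt hk, abs_neg, abs_of_nonneg (Finset.sum_nonneg fun l _ =>
      mul_nonneg (urnProb_nonneg _) (urnProb_nonneg _))]
    calc ∑ l ∈ Finset.range (k + 1), urnProb n m l * urnProb n m d
        ≤ ∑ l ∈ Finset.range (k + 1), urnProb n m (l + (d - (k + 1))) * urnProb n m (k + 1) := by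
          refine Finset.sum_le_sum fun l hl => ?_
          have := Finset.mem_range.1 hl
          simpa [Nat.add_sub_cancel' (show k + 1 ≤ d from hk)] using
            urnProb_mul_le (n := n) hm (show l ≤ k + 1 by omega) (d - (k + 1))
      _ = (∑ j ∈ (Finset.range (k + 1)).map (addRightEmbedding (d - (k + 1))), urnProb n m j)
            * urnProb n m (k + 1) := by
          rw [Finset.sum_map, Finset.sum_mul]
          rfl
      _ ≤ 1 * urnProb n m (k + 1) :=
          mul_le_mul_of_nonneg_right (sum_urnProb_le_one (by omega) _) (urnProb_nonneg _)
      _ = _ := one_mul _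
  · rw [urnCumul_of_ge (by omega) hk hkn, abs_of_nonneg (Finset.sum_nonneg fun l _ =>
      mul_nonneg (urnProb_nonneg _) (urnProb_nonneg _))]
    calc ∑ t ∈ Finset.range (n - k), urnProb n m d * urnProb n m (k + 1 + t)
        ≤ ∑ t ∈ Finset.range (n - k), urnProb n m (d + t) * urnProb n m (k + 1) :=
          Finset.sum_le_sum fun t _ => urnProb_mul_le hm (by omega) t
      _ = (∑ j ∈ (Finset.range (n - k)).map (addLeftEmbedding d), urnProb n m j)
            * urnProb n m (k + 1) := by
          rw [Finset.sum_map, Finset.sum_mul]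
          rfl
      _ ≤ 1 * urnProb n m (k + 1) :=
          mul_le_mul_of_nonneg_right (sum_urnProb_le_one (by omega) _) (urnProb_nonneg _)
      _ = _ := one_mul _

/-- Increments of the solution of the Stein equation for the law of an urn count with right-hand
side the centred indicator of `d`. -/
noncomputable def urnStein (n m d k : ℕ) : ℝ :=
  if k < n then -(m * urnCumul n m d k / ((n - k) * urnProb n m k)) else 0

lemma succ_mul_abs_urnStein_le (hm : 2 ≤ m) (d k : ℕ) : (k + 1) * |urnStein n m d k| ≤ 2 := by
  rw [urnStein]
  split_ifs with hk
  · have hm' : (2 : ℝ) ≤ m := by exact_mod_cast hm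
    have hk' : (k : ℝ) < n := by exact_mod_cast hk
    have hq := urnProb_pos (n := n) hm hk.le
    have h0 : 0 < ((n : ℝ) - k) * urnProb n m k := mul_pos (by linarith) hq
    rw [abs_neg, abs_div, abs_mul, abs_of_pos h0, Nat.abs_cast, mul_div_assoc', div_le_iff₀ h0,
      ← urnProb_succ (by omega)]
    have h1 := abs_urnCumul_le (d := d) hm hk.le
    have h2 := urnProb_nonneg (n := n) (m := m) (k + 1)
    calc ((k : ℝ) + 1) * (m * |urnCumul n m d k|)
        ≤ (k + 1) * ((2 * (m - 1)) * urnProb n m (k + 1)) := by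
          gcongr <;> linarith
      _ = _ := by ring
  · simp

/-- The Stein equation. -/
lemma urnStein_eq (hm : 2 ≤ m) {d k : ℕ} (hdn : d ≤ n) (hn : 0 < n) (hk : k ≤ n) :
    (m - 1) * k * urnStein n m d (k - 1) - (n - k) * urnStein n m d k
      = m * ((if k = d then 1 else 0) - urnProb n m d) := by
  have hm' : (2 : ℝ) ≤ m := by exact_mod_cast hm
  have hq := urnProb_pos hm hk
  have h1 : (n - k) * urnStein n m d k = -(m * urnCumul n m d k / urnProb n m k) := by
    rw [urnStein]
    split_ifs with h
    · have hk' : (0 : ℝ) < n - k := by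
        have : (k : ℝ) < n := by exact_mod_cast h
        linarith
      field_simp
    · obtain rfl : k = n := by omega
      rw [urnCumul_of_ge (by omega) hdn le_rfl]
      simp
  rw [h1]
  rcases k with _ | k
  · simp only [urnCumul, zero_add, Finset.sum_range_one, Nat.cast_zero]
    field_simp
    ring
  · have h2 : (m - 1) * ((k + 1 : ℕ) : ℝ) * urnStein n m d k
        = -(m * urnCumul n m d k / urnProb n m (k + 1)) := by
      have hk' : (0 : ℝ) < n - k := by
        have : (k : ℝ) + 1 ≤ n := by exact_mod_cast hk
        linarith
      have hq' := urnProb_pos (n := n) hm (show k ≤ n by omega)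
      have := urnProb_succ (n := n) (m := m) (by omega) k
      rw [urnStein, if_pos (by omega)]
      push_cast
      field_simp
      linear_combination (-urnCumul n m d k) * this
    rw [Nat.add_sub_cancel, h2]
    simp only [urnCumul]
    rw [Finset.sum_range_succ _ (k + 1)]
    field_simp
    ring

/-- The solution of the Stein equation as an additive functional. -/
lemma exists_urnSum_generator_eq (hm : 2 ≤ m) {d : ℕ} (hdn : d ≤ n) (hn : 0 < n) :
    ∃ g : ℕ → ℝ, fwd g = urnStein n m d ∧ ∀ ω : Fin n → Fin m,
      ∑ p, (urnSum g ω - urnSum g (ballMove ω p))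
        = m * (urnSum (fun l => if l = d then 1 else 0) ω - m * urnProb n m d) := by
  have hg : fwd (fun k => ∑ l ∈ Finset.range k, urnStein n m d l) = urnStein n m d := by
    funext k
    simp [fwd, Finset.sum_range_succ]
  refine ⟨_, hg, fun ω => ?_⟩
  rw [sum_urnSum_sub_ballMove, hg, urnSum, Finset.sum_congr rfl fun i _ =>
    urnStein_eq hm hdn hn (ballCount_le ω i), ← Finset.mul_sum, Finset.sum_sub_distrib, urnSum]
  simp

end SteinUrn

section Swap

variable {n m : ℕ}

/-- Exchange the urns `a` and `b` for the single ball `c`. -/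
def ballSwap (a b : Fin m) (c : Fin n) (ω : Fin n → Fin m) : Fin n → Fin m :=
  Function.update ω c (Equiv.swap a b (ω c))

/-- Functions of the configuration not depending on how balls in `a` and `b` are split. -/
def SwapInvariant (a b : Fin m) (φ : (Fin n → Fin m) → ℝ) : Prop :=
  ∀ c ω, φ (ballSwap a b c ω) = φ ω

lemma ballSwap_apply (a b : Fin m) (c : Fin n) (ω : Fin n → Fin m) :
    ballSwap a b c ω c = Equiv.swap a b (ω c) := Function.update_self ..

lemma ballSwap_involutive (a b : Fin m) (c : Fin n) : Function.Involutive (ballSwap a b c) := by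
  intro ω
  rw [ballSwap, ballSwap_apply, Equiv.swap_apply_self, ballSwap, Function.update_idem,
    Function.update_eq_self]

lemma sum_comp_ballSwap (a b : Fin m) (c : Fin n) (F : (Fin n → Fin m) → ℝ) :
    ∑ ω, F (ballSwap a b c ω) = ∑ ω, F ω :=
  Equiv.sum_comp (ballSwap_involutive a b c).toPerm F

lemma ballCount_ballSwap_of_ne {a b i : Fin m} (ha : i ≠ a) (hb : i ≠ b) (c : Fin n)
    (ω : Fin n → Fin m) : ballCount (ballSwap a b c ω) i = ballCount ω i := by
  have h := ballCount_update_add ω c (Equiv.swap a b (ω c)) i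
  have : Equiv.swap a b (ω c) = i ↔ ω c = i := by
    rw [Equiv.swap_apply_eq_iff, Equiv.swap_apply_of_ne_of_ne ha hb]
  simp only [this] at h
  simpa [ballSwap] using h

lemma ballCount_ballSwap_add (a b : Fin m) (c : Fin n) (ω : Fin n → Fin m) :
    ballCount (ballSwap a b c ω) a + ballCount (ballSwap a b c ω) b
      = ballCount ω a + ballCount ω b := by
  have h1 := ballCount_update_add ω c (Equiv.swap a b (ω c)) a
  have h2 := ballCount_update_add ω c (Equiv.swap a b (ω c)) b
  simp only [Equiv.swap_apply_eq_iff, Equiv.swap_apply_left, Equiv.swap_apply_right] at h1 h2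
  simp only [ballSwap]
  omega

lemma ballCount_ballSwap_left {a b : Fin m} (hab : a ≠ b) {c : Fin n} {ω : Fin n → Fin m}
    (h : ω c = b) : ballCount (ballSwap a b c ω) a = ballCount ω a + 1 := by
  have h1 := ballCount_update_add ω c (Equiv.swap a b (ω c)) a
  simpa [ballSwap, h, hab.symm] using h1

lemma SwapInvariant.symm {a b : Fin m} {φ : (Fin n → Fin m) → ℝ} (h : SwapInvariant a b φ) :
    SwapInvariant b a φ := fun c ω => by
  have := h c ω
  rwa [ballSwap, Equiv.swap_comm] at this

lemma SwapInvariant.mul {a b : Fin m} {φ ψ : (Fin n → Fin m) → ℝ} (h : SwapInvariant a b φ)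
    (h' : SwapInvariant a b ψ) : SwapInvariant a b fun ω => φ ω * ψ ω := fun c ω => by
  simp only [h c ω, h' c ω]

lemma swapInvariant_comp_add (a b : Fin m) (f : ℕ → ℝ) :
    SwapInvariant (n := n) a b fun ω => f (ballCount ω a + ballCount ω b) := fun c ω => by
  simp only [ballCount_ballSwap_add]

lemma SwapInvariant.succ_mul_sum {a b : Fin m} (hab : a ≠ b) {φ : (Fin n → Fin m) → ℝ}
    (h : SwapInvariant a b φ) {s : ℕ} (hs : ∀ ω, φ ω ≠ 0 → ballCount ω a + ballCount ω b = s)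
    (k : ℕ) :
    (k + 1) * ∑ ω, φ ω * (if ballCount ω a = k + 1 then 1 else 0)
      = (s - k) * ∑ ω, φ ω * (if ballCount ω a = k then 1 else 0) := by
  have h1 : ∀ ω, ((k : ℝ) + 1) * (φ ω * (if ballCount ω a = k + 1 then 1 else 0))
      = ∑ c, φ ω * (if ballCount ω a = k + 1 then 1 else 0) * (if ω c = a then 1 else 0) := by
    intro ω
    rw [← Finset.mul_sum, Finset.sum_boole, ← ballCount]
    split_ifs with hk
    · rw [hk]
      push_cast
      ring
    · ring
  have h2 : ∀ ω, ((s : ℝ) - k) * (φ ω * (if ballCount ω a = k then 1 else 0))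
      = ∑ c, φ ω * (if ballCount ω a = k then 1 else 0) * (if ω c = b then 1 else 0) := by
    intro ω
    rw [← Finset.mul_sum, Finset.sum_boole, ← ballCount]
    by_cases h0 : φ ω = 0
    · simp [h0]
    · rw [← hs ω h0]
      split_ifs with hk
      · rw [hk]
        push_cast
        ring
      · ring
  simp only [Finset.mul_sum, h1, h2]
  rw [Finset.sum_comm]
  conv_rhs => rw [Finset.sum_comm]
  refine Finset.sum_congr rfl fun c _ => ?_
  rw [← sum_comp_ballSwap a b c]
  refine Finset.sum_congr rfl fun ω _ => ?_
  rw [h c ω, ballSwap_apply]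
  simp only [Equiv.swap_apply_eq_iff, Equiv.swap_apply_left]
  by_cases hc : ω c = b
  · rw [ballCount_ballSwap_left hab hc]
    simp
  · simp [hc]

lemma SwapInvariant.two_pow_mul_sum {a b : Fin m} (hab : a ≠ b) {φ : (Fin n → Fin m) → ℝ}
    (h : SwapInvariant a b φ) {s : ℕ} (hs : ∀ ω, φ ω ≠ 0 → ballCount ω a + ballCount ω b = s)
    (k : ℕ) :
    2 ^ s * ∑ ω, φ ω * (if ballCount ω a = k then 1 else 0) = s.choose k * ∑ ω, φ ω := by
  have h1 : ∀ k, ∑ ω, φ ω * (if ballCount ω a = k then 1 else 0)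
      = s.choose k * ∑ ω, φ ω * (if ballCount ω a = 0 then 1 else 0) := by
    intro k
    induction k with
    | zero => simp
    | succ k ih =>
      have h2 := h.succ_mul_sum hab hs k
      have h3 : (s.choose (k + 1) : ℝ) * (k + 1) = s.choose k * (s - k) := by
        rcases le_or_gt k s with hk | hk
        · have := Nat.choose_succ_right_eq s k
          rw [← Nat.cast_sub hk]
          exact_mod_cast this
        · simp [Nat.choose_eq_zero_of_lt hk, Nat.choose_eq_zero_of_lt (Nat.lt_succ_of_lt hk)]
      rw [ih] at h2
      refine mul_left_cancel₀ (show (k : ℝ) + 1 ≠ 0 by positivity) (h2.trans ?_)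
      linear_combination (-∑ ω, φ ω * (if ballCount ω a = 0 then (1 : ℝ) else 0)) * h3
  have h4 : ∑ ω, φ ω
      = ∑ k ∈ Finset.range (s + 1), ∑ ω, φ ω * (if ballCount ω a = k then 1 else 0) := by
    rw [Finset.sum_comm]
    refine Finset.sum_congr rfl fun ω _ => ?_
    by_cases h0 : φ ω = 0
    · simp [h0]
    · have := hs ω h0
      simp [show ballCount ω a < s + 1 by omega]
  have h5 : ∑ ω, φ ω = 2 ^ s * ∑ ω, φ ω * (if ballCount ω a = 0 then 1 else 0) := by
    rw [h4, Finset.sum_congr rfl fun k _ => h1 k, ← Finset.sum_mul]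
    congr 1
    exact_mod_cast Nat.sum_range_choose s
  rw [h1 k, h5]
  ring

/-- The probability of `d` successes in `s` fair trials. -/
noncomputable def fairBinom (d s : ℕ) : ℝ := s.choose d / 2 ^ s

lemma fairBinom_le {d : ℕ} (hd : 2 ≤ d) (s : ℕ) : fairBinom d s ≤ 3 / 8 := by
  have h3 : ∀ s d : ℕ, 8 * (s + 3).choose d ≤ 3 * 2 ^ (s + 3) := by
    intro s
    induction s with
    | zero =>
      intro d
      rcases lt_or_ge 3 d with h | h
      · simp [Nat.choose_eq_zero_of_lt h]
      · interval_cases d <;> decide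
    | succ s ih =>
      intro d
      rcases d with _ | d
      · have : 1 ≤ 2 ^ s := Nat.one_le_two_pow
        simp only [Nat.choose_zero_right, pow_add]
        omega
      · have h1 := ih d
        have h2 := ih (d + 1)
        rw [show s + 1 + 3 = s + 3 + 1 by ring, Nat.choose_succ_succ', pow_succ]
        omega
  have h : 8 * s.choose d ≤ 3 * 2 ^ s := by
    rcases lt_or_ge s 3 with hs | hs
    · rcases lt_or_ge s d with h | h
      · simp [Nat.choose_eq_zero_of_lt h]
      · obtain rfl : s = 2 := by omega
        obtain rfl : d = 2 := by omega
        decide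
    · simpa [Nat.sub_add_cancel hs] using h3 (s - 3) d
  have h' : (8 : ℝ) * s.choose d ≤ 3 * 2 ^ s := by exact_mod_cast h
  rw [fairBinom, div_le_div_iff₀ (by positivity) (by norm_num)]
  linarith

/-- Given the total content of two urns, each ball is in either with equal probability. -/
lemma SwapInvariant.expect_mul_indicator {a b : Fin m} (hab : a ≠ b) {φ : (Fin n → Fin m) → ℝ}
    (h : SwapInvariant a b φ) (d : ℕ) :
    𝔼 ω, φ ω * (if ballCount ω a = d then 1 else 0)
      = 𝔼 ω, φ ω * fairBinom d (ballCount ω a + ballCount ω b) := by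
  have e : ∀ f : (Fin n → Fin m) → ℝ, ∑ ω, φ ω * f ω = ∑ s ∈ Finset.range (n + n + 1), ∑ ω,
      φ ω * (if ballCount ω a + ballCount ω b = s then 1 else 0) * f ω := fun f => by
    rw [Finset.sum_comm]
    refine Finset.sum_congr rfl fun ω _ => ?_
    have ha := ballCount_le ω a
    have hb := ballCount_le ω b
    rw [← Finset.sum_mul, ← Finset.mul_sum, Finset.sum_ite_eq,
      if_pos (Finset.mem_range.2 (by omega)), mul_one]
  simp only [Finset.expect_eq_sum_div_card]
  rw [e, e]
  congr 1
  refine Finset.sum_congr rfl fun s _ => ?_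
  have hs := (h.mul (swapInvariant_comp_add a b fun t => if t = s then 1 else 0)).two_pow_mul_sum
    hab (s := s) (fun ω hω => by
      by_contra hne
      simp [hne] at hω) d
  have h2 : (2 : ℝ) ^ s ≠ 0 := by positivity
  refine mul_left_cancel₀ h2 (hs.trans ?_)
  rw [Finset.mul_sum, Finset.mul_sum]
  refine Finset.sum_congr rfl fun ω _ => ?_
  by_cases hω : ballCount ω a + ballCount ω b = s
  · rw [hω, fairBinom]
    field_simp
  · simp [hω]

lemma expect_indicator_ballCount (a : Fin m) (d : ℕ) :
    𝔼 ω : Fin n → Fin m, (if ballCount ω a = d then (1 : ℝ) else 0) = urnProb n m d := by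
  have hm : (m : ℝ) ≠ 0 := by
    have := a.pos
    positivity
  have h1 : ∀ b : Fin m, 𝔼 ω : Fin n → Fin m, (if ballCount ω b = d then (1 : ℝ) else 0)
      = 𝔼 ω : Fin n → Fin m, (if ballCount ω a = d then (1 : ℝ) else 0) := by
    intro b
    rcases eq_or_ne b a with rfl | hba
    · rfl
    · have hc : SwapInvariant (n := n) b a fun _ => 1 := fun _ _ => rfl
      have h2 := hc.expect_mul_indicator hba d
      have h3 := hc.symm.expect_mul_indicator hba.symm d
      simp only [one_mul] at h2 h3
      rw [h2, h3]
      simp only [add_comm]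
  simp only [urnProb, urnSum, Finset.expect_sum_comm, h1]
  simp [hm]

/-- The part of the indicators of `{M_a = d}` and `{M_b = d}` that is orthogonal to the
functions not depending on how balls in `a` and `b` are split. -/
noncomputable def pairFluct (d : ℕ) (a b : Fin m) (ω : Fin n → Fin m) : ℝ :=
  (if ballCount ω a = d then 1 else 0) + (if ballCount ω b = d then 1 else 0)
    - 2 * fairBinom d (ballCount ω a + ballCount ω b)

lemma SwapInvariant.expect_mul_pairFluct {a b : Fin m} (hab : a ≠ b)
    {φ : (Fin n → Fin m) → ℝ} (h : SwapInvariant a b φ) (d : ℕ) :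
    𝔼 ω, φ ω * pairFluct d a b ω = 0 := by
  have h1 := h.expect_mul_indicator hab d
  have h2 := h.symm.expect_mul_indicator hab.symm d
  simp only [add_comm (ballCount _ b)] at h2
  have e : ∀ ω, φ ω * pairFluct d a b ω = φ ω * (if ballCount ω a = d then 1 else 0)
      + φ ω * (if ballCount ω b = d then 1 else 0)
      - 2 * (φ ω * fairBinom d (ballCount ω a + ballCount ω b)) := fun ω => by
    rw [pairFluct]; ring
  simp only [e, Finset.expect_sub_distrib, Finset.expect_add_distrib, ← Finset.mul_expect, h1, h2]
  ring

lemma urnProb_div_two_le_expect_sq_pairFluct {d : ℕ} (hd : 2 ≤ d) {a b : Fin m} (hab : a ≠ b) :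
    urnProb n m d / 2 ≤ 𝔼 ω : Fin n → Fin m, pairFluct d a b ω ^ 2 := by
  have h0 := (swapInvariant_comp_add (n := n) a b fun s => 2 * fairBinom d s).expect_mul_pairFluct
    hab d
  have h1 : urnProb n m d / 2 = 𝔼 ω : Fin n → Fin m, ((if ballCount ω a = d then (1 : ℝ) else 0)
      + (if ballCount ω b = d then 1 else 0)) / 4 := by
    rw [← Finset.expect_div, Finset.expect_add_distrib, expect_indicator_ballCount,
      expect_indicator_ballCount]
    ring
  have h2 : 𝔼 ω : Fin n → Fin m, pairFluct d a b ω ^ 2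
      = 𝔼 ω : Fin n → Fin m, (pairFluct d a b ω ^ 2
        + 2 * fairBinom d (ballCount ω a + ballCount ω b) * pairFluct d a b ω) := by
    rw [Finset.expect_add_distrib, h0, add_zero]
  rw [h1, h2]
  refine Finset.expect_le_expect fun ω _ => ?_
  have hβ := fairBinom_le hd (ballCount ω a + ballCount ω b)
  rw [pairFluct]
  split_ifs <;> linarith

/-- The variance of the number of urns containing `d` balls is of the order of its mean. -/
theorem mul_urnProb_le_uniformVar {d : ℕ} (hd : 2 ≤ d) (hm : 2 ≤ m) :
    m * urnProb n m d / 6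
      ≤ uniformVar (urnSum (n := n) (m := m) fun l => if l = d then 1 else 0) := by
  set Y := urnSum (n := n) (m := m) fun l => if l = d then 1 else 0 with hY
  let a : Fin (m / 2) → Fin m := fun j => ⟨2 * j, by omega⟩
  let b : Fin (m / 2) → Fin m := fun j => ⟨2 * j + 1, by omega⟩
  have hab : ∀ j, a j ≠ b j := fun j h => by simp [a, b] at h
  set N : (Fin n → Fin m) → ℝ := fun ω => ∑ j, pairFluct d (a j) (b j) ω with hN
  have hinvY : ∀ j, SwapInvariant (a j) (b j) fun ω => Y ω - pairFluct d (a j) (b j) ω := by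
    intro j c ω
    have e : ∀ ω : Fin n → Fin m, Y ω - pairFluct d (a j) (b j) ω
        = ∑ i ∈ (Finset.univ.erase (a j)).erase (b j), (if ballCount ω i = d then (1 : ℝ) else 0)
          + 2 * fairBinom d (ballCount ω (a j) + ballCount ω (b j)) := by
      intro ω
      rw [hY, urnSum, ← Finset.add_sum_erase _ _ (Finset.mem_univ (a j)),
        ← Finset.add_sum_erase _ _ (Finset.mem_erase.2 ⟨(hab j).symm, Finset.mem_univ (b j)⟩),
        pairFluct]
      ring
    simp only [e, ballCount_ballSwap_add]
    congr 1
    refine Finset.sum_congr rfl fun i hi => ?_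
    simp only [Finset.mem_erase] at hi
    rw [ballCount_ballSwap_of_ne hi.2.1 hi.1]
  have hinvN : ∀ j, SwapInvariant (a j) (b j) fun ω => N ω - pairFluct d (a j) (b j) ω := by
    intro j c ω
    simp only [hN]
    rw [← Finset.add_sum_erase _ _ (Finset.mem_univ j),
      ← Finset.add_sum_erase _ _ (Finset.mem_univ j), add_sub_cancel_left, add_sub_cancel_left]
    refine Finset.sum_congr rfl fun i hi => ?_
    have hij : i ≠ j := (Finset.mem_erase.1 hi).1
    have hij' : (i : ℕ) ≠ j := fun h => hij (Fin.ext h)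
    have h1 : ballCount (ballSwap (a j) (b j) c ω) (a i) = ballCount ω (a i) :=
      ballCount_ballSwap_of_ne (by simp [a]; omega) (by simp [a, b]; omega) c ω
    have h2 : ballCount (ballSwap (a j) (b j) c ω) (b i) = ballCount ω (b i) :=
      ballCount_ballSwap_of_ne (by simp [a, b]; omega) (by simp [b]; omega) c ω
    rw [pairFluct, pairFluct, h1, h2]
  set μ := 𝔼 ω, Y ω
  have horth : 𝔼 ω, (Y ω - μ - N ω) * N ω = 0 := by
    simp only [hN, Finset.mul_sum, Finset.expect_sum_comm]
    refine Finset.sum_eq_zero fun j _ => ?_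
    refine SwapInvariant.expect_mul_pairFluct (φ := fun ω => Y ω - μ - N ω) (hab j) ?_ d
    intro c ω
    have h1 := hinvY j c ω
    have h2 := hinvN j c ω
    simp only at h1 h2 ⊢
    linarith
  have hsq : 𝔼 ω, N ω ^ 2 = ∑ j, 𝔼 ω : Fin n → Fin m, pairFluct d (a j) (b j) ω ^ 2 := by
    have e : ∀ ω, N ω ^ 2 = ∑ j, ((N ω - pairFluct d (a j) (b j) ω) * pairFluct d (a j) (b j) ω
        + pairFluct d (a j) (b j) ω ^ 2) := fun ω => by
      rw [sq]
      nth_rewrite 2 [hN]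
      simp only
      rw [Finset.mul_sum]
      exact Finset.sum_congr rfl fun j _ => by ring
    simp only [e, Finset.expect_sum_comm, Finset.expect_add_distrib]
    exact Finset.sum_congr rfl fun j _ => by
      rw [(hinvN j).expect_mul_pairFluct (hab j), zero_add]
  have hvar : uniformVar Y = 𝔼 ω, (Y ω - μ - N ω) ^ 2 + 2 * 𝔼 ω, (Y ω - μ - N ω) * N ω
      + 𝔼 ω, N ω ^ 2 := by
    rw [uniformVar, Finset.mul_expect, ← Finset.expect_add_distrib, ← Finset.expect_add_distrib]
    exact Finset.expect_congr rfl fun ω _ => by ring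
  have hpos : 0 ≤ 𝔼 ω, (Y ω - μ - N ω) ^ 2 := Finset.expect_nonneg fun ω _ => sq_nonneg _
  have hsum : ((m / 2 : ℕ) : ℝ) * (urnProb n m d / 2)
      ≤ ∑ j, 𝔼 ω : Fin n → Fin m, pairFluct d (a j) (b j) ω ^ 2 := by
    have := Finset.sum_le_sum fun j (_ : j ∈ Finset.univ) =>
      urnProb_div_two_le_expect_sq_pairFluct (n := n) hd (hab j)
    simpa using this
  have hfloor : (m : ℝ) / 3 ≤ (m / 2 : ℕ) := by
    have : m ≤ 3 * (m / 2) := by omega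
    have : (m : ℝ) ≤ 3 * (m / 2 : ℕ) := by exact_mod_cast this
    linarith
  have hq := urnProb_nonneg (n := n) (m := m) d
  rw [hvar, horth, hsq]
  nlinarith

end Swap

section Dirichlet

variable {n m : ℕ}

lemma sq_le_sq_of_abs_le {a b : ℝ} (h : |a| ≤ b) : a ^ 2 ≤ b ^ 2 :=
  sq_le_sq' (abs_le.1 h).1 (abs_le.1 h).2

/-- The Dirichlet form of the ball moves. -/
noncomputable def ballDirichlet (f : (Fin n → Fin m) → ℝ) : ℝ :=
  (𝔼 ω, ∑ p, (f ω - f (ballMove ω p)) ^ 2) / m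

lemma uniformVar_le_ballDirichlet (hm : 0 < m) (f : (Fin n → Fin m) → ℝ) :
    uniformVar f ≤ ballDirichlet f / 2 := by
  have : Nonempty (Fin m) := ⟨⟨0, hm⟩⟩
  refine (uniformVar_le_sum_update n f).trans_eq ?_
  simp only [ballDirichlet, Fintype.sum_prod_type, ballMove, Finset.expect_div, Finset.sum_div,
    Fintype.expect_eq_sum_div_card (ι := Fin m), Fintype.card_fin]

lemma ballDirichlet_sub_le (f g : (Fin n → Fin m) → ℝ) :
    ballDirichlet (fun ω => f ω - g ω) ≤ 2 * ballDirichlet f + 2 * ballDirichlet g := by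
  simp only [ballDirichlet]
  rw [← mul_div_assoc, ← mul_div_assoc, ← add_div, Finset.mul_expect, Finset.mul_expect,
    ← Finset.expect_add_distrib]
  refine div_le_div_of_nonneg_right (Finset.expect_le_expect fun ω _ => ?_) (Nat.cast_nonneg m)
  rw [Finset.mul_sum, Finset.mul_sum, ← Finset.sum_add_distrib]
  refine Finset.sum_le_sum fun p _ => ?_
  nlinarith [sq_nonneg (f ω - f (ballMove ω p) + (g ω - g (ballMove ω p)))]

lemma ballDirichlet_mul_le (hm : 0 < m) {f : (Fin n → Fin m) → ℝ} {c τ : ℝ}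
    (hc : ∀ ω, |f ω| ≤ c) (hτ : ∀ ω p, |f ω - f (ballMove ω p)| ≤ τ)
    (g : (Fin n → Fin m) → ℝ) :
    ballDirichlet (fun ω => f ω * g ω)
      ≤ 2 * c ^ 2 * ballDirichlet g + 2 * τ ^ 2 * n * 𝔼 ω, g ω ^ 2 := by
  have hm' : (0 : ℝ) < m := by positivity
  have hg : 𝔼 ω : Fin n → Fin m, ∑ p, g (ballMove ω p) ^ 2 = n * m * 𝔼 ω, g ω ^ 2 := by
    rw [← reversibleMoves_ballMove.expect fun x _ => g x ^ 2]
    simp [Finset.mul_expect]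
  have key : 𝔼 ω, ∑ p, (f ω * g ω - f (ballMove ω p) * g (ballMove ω p)) ^ 2
      ≤ 2 * c ^ 2 * 𝔼 ω, ∑ p, (g ω - g (ballMove ω p)) ^ 2
        + 2 * τ ^ 2 * 𝔼 ω : Fin n → Fin m, ∑ p, g (ballMove ω p) ^ 2 := by
    rw [Finset.mul_expect, Finset.mul_expect, ← Finset.expect_add_distrib]
    refine Finset.expect_le_expect fun ω _ => ?_
    rw [Finset.mul_sum, Finset.mul_sum, ← Finset.sum_add_distrib]
    refine Finset.sum_le_sum fun p _ => ?_
    have h1 := mul_le_mul_of_nonneg_right (sq_le_sq_of_abs_le (hc ω)) (sq_nonneg (g ω - g (ballMove ω p)))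
    have h2 := mul_le_mul_of_nonneg_right (sq_le_sq_of_abs_le (hτ ω p)) (sq_nonneg (g (ballMove ω p)))
    nlinarith [sq_nonneg (f ω * (g ω - g (ballMove ω p))
      - (f ω - f (ballMove ω p)) * g (ballMove ω p))]
  rw [hg] at key
  simp only [ballDirichlet]
  rw [div_le_iff₀ hm']
  refine key.trans_eq ?_
  field_simp

lemma sum_mul_urnProb_pred (hm : 0 < m) (F : ℕ → ℝ) :
    ∑ k ∈ Finset.range (n + 1), urnProb n m k * ((m - 1) * k * F (k - 1))
      = ∑ k ∈ Finset.range (n + 1), (n - k) * urnProb n m k * F k := by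
  rw [Finset.sum_range_succ', Finset.sum_range_succ _ n]
  simp only [Nat.cast_zero, mul_zero, zero_mul, add_zero, sub_self, Nat.add_sub_cancel]
  refine Finset.sum_congr rfl fun k _ => ?_
  rw [← urnProb_succ hm]
  push_cast
  ring

lemma ballDirichlet_urnSum_le (hm : 0 < m) (φ : ℕ → ℝ) :
    ballDirichlet (urnSum (n := n) (m := m) φ)
      ≤ 4 * ∑ k ∈ Finset.range (n + 1), (n - k) * urnProb n m k * fwd φ k ^ 2 := by
  have hm' : (0 : ℝ) < m := by positivity
  have h1 : ∀ ω : Fin n → Fin m, ∑ p, (urnSum φ ω - urnSum φ (ballMove ω p)) ^ 2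
      ≤ urnSum (fun k => 2 * ((m - 1) * k * fwd φ (k - 1) ^ 2) + 2 * ((n - k) * fwd φ k ^ 2)) ω := by
    intro ω
    calc ∑ p, (urnSum φ ω - urnSum φ (ballMove ω p)) ^ 2
        ≤ ∑ p : Fin n × Fin m, if ω p.1 = p.2 then 0 else 2 * fwd φ (ballCount ω (ω p.1) - 1) ^ 2
            + 2 * fwd φ (ballCount ω p.2) ^ 2 := by
          refine Finset.sum_le_sum fun p _ => ?_
          split_ifs with h
          · rw [ballMove_of_eq h, sub_self, zero_pow two_ne_zero]
          · rw [ballMove, urnSum_sub_update φ h, ← fwd, ← fwd]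
            nlinarith [sq_nonneg (fwd φ (ballCount ω (ω p.1) - 1) + fwd φ (ballCount ω p.2))]
      _ = _ := by
          rw [sum_ballMove ω _ (fun a c => 2 * fwd φ (a - 1) ^ 2 + 2 * fwd φ c ^ 2)
            (fun p h => if_pos h) fun p h => if_neg h]
          have e : ∀ i, ∑ j, (ballCount ω i : ℝ)
              * (2 * fwd φ (ballCount ω i - 1) ^ 2 + 2 * fwd φ (ballCount ω j) ^ 2)
              = m * (2 * (ballCount ω i * fwd φ (ballCount ω i - 1) ^ 2))
                + ballCount ω i * (2 * urnSum (fun k => fwd φ k ^ 2) ω) := fun i => by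
            simp only [mul_add, Finset.sum_add_distrib, ← Finset.mul_sum, urnSum, Finset.sum_const,
              Finset.card_univ, Fintype.card_fin, nsmul_eq_mul]
            ring
          simp only [e]
          rw [Finset.sum_add_distrib, ← Finset.sum_mul, sum_ballCount]
          simp only [urnSum, Finset.mul_sum, ← Finset.sum_add_distrib, ← Finset.sum_sub_distrib]
          exact Finset.sum_congr rfl fun i _ => by ring
  have h2 := Finset.expect_le_expect fun ω (_ : ω ∈ Finset.univ) => h1 ω
  rw [expect_urnSum hm] at h2
  rw [ballDirichlet, div_le_iff₀ hm']
  refine h2.trans_eq ?_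
  simp only [mul_add, Finset.sum_add_distrib, mul_left_comm _ (2 : ℝ), ← Finset.mul_sum]
  rw [sum_mul_urnProb_pred hm fun k => fwd φ k ^ 2]
  simp only [mul_left_comm (urnProb n m _), ← mul_assoc]
  ring

lemma expect_sq_urnSum_le (hm : 0 < m) (φ : ℕ → ℝ) :
    𝔼 ω : Fin n → Fin m, urnSum φ ω ^ 2
      ≤ m ^ 2 * ∑ k ∈ Finset.range (n + 1), urnProb n m k * φ k ^ 2 := by
  calc 𝔼 ω : Fin n → Fin m, urnSum φ ω ^ 2
      ≤ 𝔼 ω : Fin n → Fin m, m * urnSum (fun k => φ k ^ 2) ω := by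
        refine Finset.expect_le_expect fun ω _ => ?_
        simpa [urnSum] using
          sq_sum_le_card_mul_sum_sq (s := Finset.univ) (f := fun i => φ (ballCount ω i))
    _ = _ := by
        rw [← Finset.mul_expect, expect_urnSum hm]
        ring

lemma abs_urnSum_le {φ : ℕ → ℝ} {c : ℝ} (hc : ∀ k, |φ k| ≤ c) (ω : Fin n → Fin m) :
    |urnSum φ ω| ≤ m * c := by
  refine (Finset.abs_sum_le_sum_abs _ _).trans ?_
  simpa using Finset.sum_le_sum fun i (_ : i ∈ Finset.univ) => hc (ballCount ω i)

lemma abs_urnSum_mul_le {φ : ℕ → ℝ} {c : ℝ} (hc : ∀ k : ℕ, |φ k| ≤ k * c) (ω : Fin n → Fin m) :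
    |urnSum φ ω| ≤ n * c := by
  refine (Finset.abs_sum_le_sum_abs _ _).trans ?_
  rw [← sum_ballCount ω, Finset.sum_mul]
  exact Finset.sum_le_sum fun i _ => hc (ballCount ω i)

lemma mul_urnProb_succ_le (hm : 2 ≤ m) (d : ℕ) :
    m * urnProb n m (d + 1) ≤ 2 * n * urnProb n m d := by
  have hm' : (2 : ℝ) ≤ m := by exact_mod_cast hm
  have h := urnProb_succ (n := n) (m := m) (by omega) d
  have h1 := urnProb_nonneg (n := n) (m := m) (d + 1)
  have h0 := urnProb_nonneg (n := n) (m := m) d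
  have hd : (0 : ℝ) ≤ d := Nat.cast_nonneg d
  nlinarith [mul_nonneg hd h0, mul_nonneg hd h1, mul_nonneg (mul_nonneg hd h1) (sub_nonneg.2 hm'),
    mul_nonneg h1 (sub_nonneg.2 hm')]

lemma mul_urnProb_le_succ (hm : 0 < m) {d : ℕ} (hd : d + 1 ≤ n) :
    n * urnProb n m d ≤ (d + 1) ^ 2 * (m * urnProb n m (d + 1)) := by
  have hm' : (0 : ℝ) < m := by positivity
  have h := urnProb_succ (n := n) (m := m) (by omega) d
  have h1 := urnProb_nonneg (n := n) (m := m) (d + 1)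
  have h0 := urnProb_nonneg (n := n) (m := m) d
  have hd' : (d : ℝ) + 1 ≤ n := by exact_mod_cast hd
  have h2 : (n : ℝ) ≤ (d + 1) * (n - d) := by nlinarith [(Nat.cast_nonneg d : (0 : ℝ) ≤ d)]
  calc n * urnProb n m d ≤ (d + 1) * (n - d) * urnProb n m d := mul_le_mul_of_nonneg_right h2 h0
    _ = (d + 1) * ((m - 1) * (d + 1) * urnProb n m (d + 1)) := by rw [h]; ring
    _ ≤ _ := by nlinarith [mul_nonneg (sq_nonneg ((d : ℝ) + 1)) h1]

lemma sum_le_sum_of_support {ι : Type*} [DecidableEq ι] (s t : Finset ι) {f : ι → ℝ}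
    (h0 : ∀ k, 0 ≤ f k) (h : ∀ k ∉ t, f k = 0) : ∑ k ∈ s, f k ≤ ∑ k ∈ t, f k := by
  rw [Finset.sum_subset (Finset.subset_union_right (s₁ := s)) fun k _ hk => h k hk]
  exact Finset.sum_le_sum_of_subset_of_nonneg Finset.subset_union_left fun k _ _ => h0 k

/-- Functions supported near `d` and of the size of the terms of the variance functionals. -/
structure NearLevel (d : ℕ) (α K : ℝ) (φ : ℕ → ℝ) : Prop where
  eq_zero : ∀ k, k + 1 ≠ d → k ≠ d → k ≠ d + 1 → φ k = 0
  pred : ∀ k, k + 1 = d → |φ k| ≤ K * α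
  self : |φ d| ≤ K * (1 + α)
  succ : |φ (d + 1)| ≤ K * (1 + α)

lemma NearLevel.ballDirichlet_le {d : ℕ} {K : ℝ} {φ : ℕ → ℝ} (hd : 2 ≤ d) (hdn : d ≤ n)
    (hm : 2 ≤ m) (h : NearLevel d (n / m) K φ) :
    ballDirichlet (urnSum (n := n) (m := m) φ)
      ≤ 4 * (d ^ 3 + 4 * d + 6) * K ^ 2 * (m * urnProb n m d * (1 + n / m : ℝ) ^ 4) := by
  have hm0 : 0 < m := by omega
  have hm' : (0 : ℝ) < m := by positivity
  obtain ⟨e, rfl⟩ : ∃ e, d = e + 2 := ⟨d - 2, by omega⟩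
  set α : ℝ := n / m with hα
  have hα0 : 0 ≤ α := by positivity
  have hn : (n : ℝ) = α * m := by rw [hα]; field_simp
  set q := urnProb n m
  have hq : ∀ k, 0 ≤ q k := urnProb_nonneg
  set f : ℕ → ℝ := fun k => (n - k) * q k * fwd φ k ^ 2 with hf
  have hf0 : ∀ k, 0 ≤ f k := fun k => by
    rcases le_or_gt k n with hk | hk
    · have : (k : ℝ) ≤ n := by exact_mod_cast hk
      exact mul_nonneg (mul_nonneg (by linarith) (hq k)) (sq_nonneg _)
    · simp [hf, q, urnProb_of_lt hk]
  have hK : 0 ≤ K * (1 + α) := (abs_nonneg _).trans h.self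
  have hsum : ∑ k ∈ Finset.range (n + 1), f k ≤ f e + f (e + 1) + f (e + 2) + f (e + 3) := by
    have h1 := sum_le_sum_of_support (Finset.range (n + 1)) {e, e + 1, e + 2, e + 3} hf0
      fun k hk => by
        simp only [Finset.mem_insert, Finset.mem_singleton, not_or] at hk
        simp only [hf, fwd]
        rw [h.eq_zero k (by omega) (by omega) (by omega),
          h.eq_zero (k + 1) (by omega) (by omega) (by omega)]
        ring
    simpa [add_assoc] using h1
  have hpred := h.pred (e + 1) rfl
  have hpred' : |φ (e + 1)| ≤ K * (1 + α) := by
    refine hpred.trans ?_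
    by_contra hlt
    push Not at hlt
    nlinarith [abs_nonneg (φ (e + 1))]
  have hr1 := urnProb_succ (n := n) hm0 e
  have hr2 := urnProb_succ (n := n) hm0 (e + 1)
  have hr3 := mul_urnProb_succ_le (n := n) hm (e + 2)
  have hr4 := mul_urnProb_le_succ (n := n) hm0 (d := e + 1) (by omega)
  push_cast at hr2 hr4
  have hfwd : ∀ {x y : ℝ}, |x| ≤ K * (1 + α) → |y| ≤ K * (1 + α) →
      (x - y) ^ 2 ≤ 4 * ((1 + α) ^ 2 * K ^ 2) := fun hx hy => by
    have := sq_le_sq_of_abs_le ((abs_sub _ _).trans (add_le_add hx hy))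
    linarith
  have e1 : f e ≤ ((e + 2) ^ 3 * α) * K ^ 2 * (m * q (e + 2)) := by
    have h0 : fwd φ e ^ 2 ≤ (K * α) ^ 2 := by
      rw [fwd, h.eq_zero e (by omega) (by omega) (by omega), sub_zero]
      exact sq_le_sq_of_abs_le hpred
    calc f e = (m - 1) * (e + 1) * q (e + 1) * fwd φ e ^ 2 := by rw [hr1]
      _ ≤ m * (e + 2) * q (e + 1) * (K * α) ^ 2 := by
        have := hq (e + 1)
        gcongr <;> linarith
      _ = (e + 2) * α * K ^ 2 * (n * q (e + 1)) := by rw [hn]; ring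
      _ ≤ (e + 2) * α * K ^ 2 * ((e + 1 + 1) ^ 2 * (m * q (e + 2))) := by gcongr
      _ = _ := by ring
  have e2 : f (e + 1) ≤ 4 * (e + 2) * (1 + α) ^ 2 * K ^ 2 * (m * q (e + 2)) := by
    calc f (e + 1) = (m - 1) * (e + 1 + 1) * q (e + 2) * fwd φ (e + 1) ^ 2 := by
          rw [hr2]
          simp only [hf]
          push_cast
          rfl
      _ ≤ m * (e + 1 + 1) * q (e + 2) * (4 * ((1 + α) ^ 2 * K ^ 2)) := by
        have := hq (e + 2)
        gcongr
        · linarith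
        · exact hfwd h.self hpred'
      _ = _ := by ring
  have e3 : f (e + 2) ≤ 4 * α * (1 + α) ^ 2 * K ^ 2 * (m * q (e + 2)) := by
    calc f (e + 2) ≤ n * q (e + 2) * (4 * ((1 + α) ^ 2 * K ^ 2)) := by
          have := hq (e + 2)
          simp only [hf]
          gcongr
          · exact sub_le_self _ (Nat.cast_nonneg _)
          · exact hfwd h.succ h.self
      _ = _ := by rw [hn]; ring
  have e4 : f (e + 3) ≤ 2 * α ^ 2 * (1 + α) ^ 2 * K ^ 2 * (m * q (e + 2)) := by
    have h0 : fwd φ (e + 3) ^ 2 ≤ (K * (1 + α)) ^ 2 := by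
      rw [fwd, h.eq_zero (e + 3 + 1) (by omega) (by omega) (by omega), zero_sub, neg_sq]
      exact sq_le_sq_of_abs_le h.succ
    calc f (e + 3) ≤ n * q (e + 3) * (K * (1 + α)) ^ 2 := by
          have := hq (e + 3)
          simp only [hf]
          gcongr
          exact sub_le_self _ (Nat.cast_nonneg _)
      _ = α * (m * q (e + 3)) * (K * (1 + α)) ^ 2 := by rw [hn]; ring
      _ ≤ α * (2 * n * q (e + 2)) * (K * (1 + α)) ^ 2 := by gcongr
      _ = _ := by rw [hn]; ring
  refine (ballDirichlet_urnSum_le hm0 φ).trans ?_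
  have hp : ((e + 2 : ℝ) ^ 3 * α) + 4 * (e + 2) * (1 + α) ^ 2 + 4 * α * (1 + α) ^ 2
      + 2 * α ^ 2 * (1 + α) ^ 2 ≤ ((e + 2) ^ 3 + 4 * (e + 2) + 6) * (1 + α) ^ 4 := by
    have hs : 1 ≤ 1 + α := by linarith
    have hαs : α ≤ 1 + α := by linarith
    generalize 1 + α = s at hs hαs
    have hs2 : s ^ 2 ≤ s ^ 4 := pow_le_pow_right₀ hs (by norm_num)
    have h1 : α ≤ s ^ 4 := hαs.trans (le_self_pow₀ hs (by norm_num))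
    have h3 : α * s ^ 2 ≤ s ^ 4 :=
      calc α * s ^ 2 ≤ s * s ^ 2 := by gcongr
        _ = s ^ 3 := by ring
        _ ≤ s ^ 4 := pow_le_pow_right₀ hs (by norm_num)
    have h4 : α ^ 2 * s ^ 2 ≤ s ^ 4 :=
      calc α ^ 2 * s ^ 2 ≤ s ^ 2 * s ^ 2 := by gcongr
        _ = s ^ 4 := by ring
    have he : (0 : ℝ) ≤ e + 2 := by positivity
    linarith [mul_le_mul_of_nonneg_left h1 (pow_nonneg he 3), mul_le_mul_of_nonneg_left hs2 he]
  have hKq : 0 ≤ K ^ 2 * (m * q (e + 2)) := mul_nonneg (sq_nonneg K) (mul_nonneg hm'.le (hq _))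
  have := mul_le_mul_of_nonneg_right hp hKq
  push_cast
  linarith

end Dirichlet

section Level

variable {n m : ℕ}

lemma ballDirichlet_const_mul (c : ℝ) (f : (Fin n → Fin m) → ℝ) :
    ballDirichlet (fun ω => c * f ω) = c ^ 2 * ballDirichlet f := by
  simp only [ballDirichlet, ← mul_sub, mul_pow, ← Finset.mul_sum, ← Finset.mul_expect,
    mul_div_assoc]

lemma urnSum_const_mul (c : ℝ) (φ : ℕ → ℝ) (ω : Fin n → Fin m) :
    urnSum (fun k => c * φ k) ω = c * urnSum φ ω := by
  simp only [urnSum, Finset.mul_sum]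

lemma NearLevel.expect_sq_le {d : ℕ} {K : ℝ} {φ : ℕ → ℝ} (hd : 2 ≤ d) (hdn : d ≤ n)
    (hm : 2 ≤ m) (h : NearLevel d 1 K φ) :
    n * 𝔼 ω : Fin n → Fin m, urnSum φ ω ^ 2
      ≤ (d ^ 2 + 8) * K ^ 2 * m ^ 2 * (m * urnProb n m d * (1 + n / m : ℝ) ^ 4) := by
  have hm0 : 0 < m := by omega
  have hm' : (0 : ℝ) < m := by positivity
  obtain ⟨e, rfl⟩ : ∃ e, d = e + 1 := ⟨d - 1, by omega⟩
  set α : ℝ := n / m with hα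
  have hα0 : 0 ≤ α := by positivity
  have hn : (n : ℝ) = α * m := by rw [hα]; field_simp
  set q := urnProb n m
  have hq : ∀ k, 0 ≤ q k := urnProb_nonneg
  have hsum : ∑ k ∈ Finset.range (n + 1), q k * φ k ^ 2
      ≤ q e * φ e ^ 2 + q (e + 1) * φ (e + 1) ^ 2 + q (e + 2) * φ (e + 2) ^ 2 := by
    have h1 := sum_le_sum_of_support (Finset.range (n + 1)) {e, e + 1, e + 2}
      (fun k => mul_nonneg (hq k) (sq_nonneg (φ k))) fun k hk => by
        simp only [Finset.mem_insert, Finset.mem_singleton, not_or] at hk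
        rw [h.eq_zero k (by omega) (by omega) (by omega)]
        ring
    simpa [add_assoc] using h1
  have h1 := mul_urnProb_le_succ (n := n) hm0 hdn
  have h2 := mul_urnProb_succ_le (n := n) hm (e + 1)
  calc n * 𝔼 ω : Fin n → Fin m, urnSum φ ω ^ 2
      ≤ n * (m ^ 2 * (q e * φ e ^ 2 + q (e + 1) * φ (e + 1) ^ 2 + q (e + 2) * φ (e + 2) ^ 2)) := by
        gcongr
        exact (expect_sq_urnSum_le hm0 φ).trans (by gcongr)
    _ ≤ n * (m ^ 2 * (q e * (K * 1) ^ 2 + q (e + 1) * (K * (1 + 1)) ^ 2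
          + q (e + 2) * (K * (1 + 1)) ^ 2)) := by
        have h3 := sq_le_sq_of_abs_le (h.pred e rfl)
        have h4 := sq_le_sq_of_abs_le h.self
        have h5 := sq_le_sq_of_abs_le h.succ
        have := hq e
        have := hq (e + 1)
        have := hq (e + 2)
        gcongr
    _ = K ^ 2 * m ^ 2 * (n * q e + 4 * (n * q (e + 1)) + 4 * (α * (m * q (e + 2)))) := by
        rw [hn]; ring
    _ ≤ K ^ 2 * m ^ 2 * ((e + 1) ^ 2 * (m * q (e + 1)) + 4 * (n * q (e + 1))
          + 4 * (α * (2 * n * q (e + 1)))) := by gcongr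
    _ = K ^ 2 * m ^ 2 * (((e + 1) ^ 2 + (4 * α + 8 * α ^ 2)) * (m * q (e + 1))) := by
        rw [hn]; ring
    _ ≤ K ^ 2 * m ^ 2 * (((e + 1) ^ 2 + 8) * (1 + α) ^ 4 * (m * q (e + 1))) := by
        have := hq (e + 1)
        gcongr
        have h6 : 1 ≤ (1 + α) ^ 4 := one_le_pow₀ (by linarith)
        have h7 : (1 + α) ^ 2 ≤ (1 + α) ^ 4 := pow_le_pow_right₀ (by linarith) (by norm_num)
        nlinarith [mul_le_mul_of_nonneg_left h6 (sq_nonneg ((e : ℝ) + 1))]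
    _ = _ := by push_cast; ring

/-- Combinations of differences of the indicator of `d`. -/
lemma NearLevel.of_fwd {d : ℕ} {α K : ℝ} {φ u v : ℕ → ℝ} (hd : 2 ≤ d)
    (h : ∀ k, φ k = u k * fwd (fun l => if l = d then 1 else 0) (k - 1)
      + v k * fwd (fun l => if l = d then 1 else 0) k)
    (h0 : u 0 = 0) (hpred : ∀ k, k + 1 = d → |v k| ≤ K * α) (hself : |u d - v d| ≤ K * (1 + α))
    (hsucc : |u (d + 1)| ≤ K * (1 + α)) : NearLevel d α K φ := by
  refine ⟨fun k h1 h2 h3 => ?_, fun k hk => ?_, ?_, ?_⟩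
  · rw [h k]
    rcases k with _ | k
    · simp [h0, fwd, h1, h2]
    · have : k + 1 ≠ d := h2
      have : k ≠ d := by omega
      simp [fwd, *]
  · rw [h k]
    have h1 : k - 1 + 1 ≠ d := by omega
    have h2 : k - 1 ≠ d := by omega
    have h3 : k ≠ d := by omega
    simpa [fwd, h1, h2, h3, hk] using hpred k hk
  · rw [h d]
    have h1 : d - 1 + 1 = d := by omega
    have h2 : d - 1 ≠ d := by omega
    simpa [fwd, h1, h2, sub_eq_add_neg] using hself
  · rw [h (d + 1)]
    have h1 : d + 1 + 1 ≠ d := by omega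
    simpa [fwd, abs_neg, h1] using hsucc

lemma ballDirichlet_generator_le {d : ℕ} (hd : 2 ≤ d) (hdn : d ≤ n) (hm : 2 ≤ m) :
    ballDirichlet (fun ω : Fin n → Fin m => (∑ p, (urnSum (fun l => if l = d then 1 else 0) ω
        - urnSum (fun l => if l = d then 1 else 0) (ballMove ω p))) / m)
      ≤ 4 * (d ^ 3 + 4 * d + 6) * (d + 1) ^ 2 * (m * urnProb n m d * (1 + n / m : ℝ) ^ 4) := by
  have hm' : (2 : ℝ) ≤ m := by exact_mod_cast hm
  have hdn' : (d : ℝ) ≤ n := by exact_mod_cast hdn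
  have hd0 : (0 : ℝ) ≤ d := Nat.cast_nonneg d
  have e : (fun ω : Fin n → Fin m => (∑ p, (urnSum (fun l => if l = d then 1 else 0) ω
        - urnSum (fun l => if l = d then 1 else 0) (ballMove ω p))) / m)
      = urnSum fun k => ((m - 1) * k / m) * fwd (fun l => if l = d then 1 else 0) (k - 1)
        + (-((n - k) / m)) * fwd (fun l => if l = d then 1 else 0) k := by
    funext ω
    rw [sum_urnSum_sub_ballMove, urnSum, Finset.sum_div]
    exact Finset.sum_congr rfl fun i _ => by ring
  have h1 : ∀ k : ℕ, (m - 1) * (k : ℝ) / m ≤ k := fun k => by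
    rw [div_le_iff₀ (by linarith)]
    nlinarith [(Nat.cast_nonneg k : (0 : ℝ) ≤ k)]
  have h1' : ∀ k : ℕ, 0 ≤ (m - 1) * (k : ℝ) / m := fun k =>
    div_nonneg (mul_nonneg (by linarith) (Nat.cast_nonneg k)) (by linarith)
  have h2 : ∀ k : ℕ, ((n : ℝ) - k) / m ≤ n / m := fun k => by
    gcongr
    exact sub_le_self _ (Nat.cast_nonneg k)
  have h2' : ∀ k ≤ n, 0 ≤ ((n : ℝ) - k) / m := fun k hk => by
    have : (k : ℝ) ≤ n := by exact_mod_cast hk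
    exact div_nonneg (by linarith) (by linarith)
  have hα : 0 ≤ (n : ℝ) / m := by positivity
  have hdα : 0 ≤ (d : ℝ) * (n / m) := by positivity
  rw [e]
  refine NearLevel.ballDirichlet_le hd hdn hm (NearLevel.of_fwd hd (fun k => rfl) (by simp) ?_ ?_ ?_)
  · intro k hk
    rw [abs_neg, abs_of_nonneg (h2' k (by omega))]
    linarith [h2 k]
  · rw [sub_neg_eq_add, abs_of_nonneg (add_nonneg (h1' d) (h2' d hdn))]
    linarith [h1 d, h2 d]
  · rw [abs_of_nonneg (h1' (d + 1))]
    have := h1 (d + 1)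
    push_cast at this ⊢
    linarith

lemma ballDirichlet_carre_le {d : ℕ} (hd : 2 ≤ d) (hdn : d ≤ n) (hm : 2 ≤ m) {g : ℕ → ℝ}
    (hg : ∀ k : ℕ, (k + 1) * |fwd g k| ≤ 2) :
    ballDirichlet (fun ω : Fin n → Fin m => (∑ p, (urnSum g ω - urnSum g (ballMove ω p))
        * (urnSum (fun l => if l = d then 1 else 0) ω
          - urnSum (fun l => if l = d then 1 else 0) (ballMove ω p))) / m)
      ≤ 10000 * (d ^ 3 + 4 * d + 6) * (d + 1) ^ 2
        * (m * urnProb n m d * (1 + n / m : ℝ) ^ 4) := by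
  have hm0 : 0 < m := by omega
  have hm' : (2 : ℝ) ≤ m := by exact_mod_cast hm
  have hn1 : (1 : ℝ) ≤ n := by exact_mod_cast (by omega : 1 ≤ n)
  have hd0 : (0 : ℝ) ≤ d := Nat.cast_nonneg d
  set h : ℕ → ℝ := fun l => if l = d then 1 else 0 with hh
  set α : ℝ := n / m with hα
  have hα0 : 0 ≤ α := by positivity
  have hmα : 1 / (m : ℝ) ≤ α := by rw [hα]; gcongr
  set Q := m * urnProb n m d * (1 + α) ^ 4 with hQ
  have hQ0 : 0 ≤ Q := mul_nonneg (mul_nonneg (by positivity) (urnProb_nonneg d)) (by positivity)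
  have hδ : ∀ k, |fwd g k| ≤ 2 := fun k => by
    nlinarith [hg k, abs_nonneg (fwd g k), (Nat.cast_nonneg k : (0 : ℝ) ≤ k)]
  have hkδ : ∀ k : ℕ, |k * fwd g k| ≤ 2 := fun k => by
    rw [abs_mul, Nat.abs_cast]
    nlinarith [hg k, abs_nonneg (fwd g k)]
  have hkδ' : ∀ k : ℕ, |k * fwd g (k - 1)| ≤ 2 := fun k => by
    rcases k with _ | k
    · simp
    · rw [abs_mul, Nat.abs_cast, Nat.add_sub_cancel]
      exact_mod_cast hg k
  have hdiff : ∀ k : ℕ, |k * (fwd g (k - 1) - fwd g k) / m| ≤ 4 * α := fun k => by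
    rw [abs_div, Nat.abs_cast, mul_sub, div_le_iff₀ (by linarith)]
    have h1 := (abs_sub _ _).trans (add_le_add (hkδ' k) (hkδ k))
    have h2 : 1 ≤ α * m := by rwa [div_le_iff₀ (by linarith)] at hmα
    linarith
  set φ : ℕ → ℝ := fun k => (k * fwd g (k - 1) - k * (fwd g (k - 1) - fwd g k) / m) * fwd h (k - 1)
    + (α * fwd g k + k * (fwd g (k - 1) - fwd g k) / m) * fwd h k with hφ
  have e : (fun ω : Fin n → Fin m => (∑ p, (urnSum g ω - urnSum g (ballMove ω p))
        * (urnSum h ω - urnSum h (ballMove ω p))) / m)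
      = fun ω => (urnSum φ ω - (urnSum (fwd g) ω / m) * urnSum (fun k => k * fwd h (k - 1)) ω)
        - (urnSum (fun k => k * fwd g (k - 1)) ω / m) * urnSum (fwd h) ω := by
    funext ω
    rw [sum_urnSum_sub_mul_sub, sub_div, sub_div, mul_div_right_comm, mul_div_right_comm]
    congr 2
    rw [urnSum, urnSum, Finset.sum_div]
    refine Finset.sum_congr rfl fun i _ => ?_
    simp only [hφ, hα]
    field_simp
    ring
  have hE1 : ballDirichlet (urnSum (n := n) (m := m) φ)
      ≤ 4 * (d ^ 3 + 4 * d + 6) * 10 ^ 2 * Q := by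
    refine NearLevel.ballDirichlet_le hd hdn hm (NearLevel.of_fwd hd (fun k => rfl) (by simp)
      ?_ ?_ ?_)
    · intro k _
      have h1 : |α * fwd g k| ≤ α * 2 := by
        rw [abs_mul, abs_of_nonneg hα0]
        exact mul_le_mul_of_nonneg_left (hδ k) hα0
      linarith [abs_add_le (α * fwd g k) (k * (fwd g (k - 1) - fwd g k) / m), hdiff k]
    · have h1 : |α * fwd g d| ≤ α * 2 := by
        rw [abs_mul, abs_of_nonneg hα0]
        exact mul_le_mul_of_nonneg_left (hδ d) hα0
      have h2 := abs_le.1 (hdiff d)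
      have h3 := abs_le.1 (hkδ' d)
      have h4 := abs_le.1 h1
      exact abs_le.2 ⟨by linarith, by linarith⟩
    · have h2 := abs_le.1 (hdiff (d + 1))
      have h3 := abs_le.1 (hkδ' (d + 1))
      exact abs_le.2 ⟨by linarith, by linarith⟩
  have hA : ∀ β : ℝ, 0 ≤ β → NearLevel d β (d + 1) fun k => k * fwd h (k - 1) := fun β hβ => by
    have hdβ : 0 ≤ (d : ℝ) * β := by positivity
    refine NearLevel.of_fwd (u := fun k => k) (v := fun _ => 0) hd (fun k => by simp [hh]) (by simp)
      (fun k _ => ?_) ?_ ?_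
    · rw [abs_zero]; positivity
    · rw [sub_zero, Nat.abs_cast]; linarith
    · rw [Nat.abs_cast]; push_cast; linarith
  have hC : ∀ β : ℝ, 0 ≤ β → NearLevel d β 1 fun k => β * fwd h k := fun β hβ => by
    refine NearLevel.of_fwd (u := fun k => 0) (v := fun _ => β) hd (fun k => by simp [hh]) rfl
      (fun k _ => ?_) ?_ ?_
    · rw [abs_of_nonneg hβ, one_mul]
    · rw [zero_sub, abs_neg, abs_of_nonneg hβ]; linarith
    · rw [abs_zero]; linarith
  have hτ : ∀ χ : ℕ → ℝ, (∀ k, |χ k| ≤ 2) → ∀ (ω : Fin n → Fin m) p,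
      |urnSum χ ω / m - urnSum χ (ballMove ω p) / m| ≤ 8 / m := fun χ hχ ω p => by
    rw [← sub_div, abs_div, Nat.abs_cast]
    gcongr
    refine (abs_urnSum_sub_ballMove_le (c := 4) (fun k => ?_) ω p).trans (by norm_num)
    exact (abs_sub _ _).trans (by linarith [hχ k, hχ (k + 1)])
  have hmul : ∀ {ψ : ℕ → ℝ} {K : ℝ}, NearLevel d 1 K ψ →
      2 * (8 / m : ℝ) ^ 2 * n * 𝔼 ω : Fin n → Fin m, urnSum ψ ω ^ 2
        ≤ 128 * (d ^ 2 + 8) * K ^ 2 * Q := fun {ψ K} hψ => by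
    have h1 := hψ.expect_sq_le hd hdn hm
    calc 2 * (8 / m : ℝ) ^ 2 * n * 𝔼 ω : Fin n → Fin m, urnSum ψ ω ^ 2
        = 128 / m ^ 2 * (n * 𝔼 ω : Fin n → Fin m, urnSum ψ ω ^ 2) := by ring
      _ ≤ 128 / m ^ 2 * ((d ^ 2 + 8) * K ^ 2 * m ^ 2 * Q) := by gcongr
      _ = _ := by field_simp
  have hE2 := (ballDirichlet_mul_le hm0 (c := 2) (fun ω => by
      rw [abs_div, Nat.abs_cast, div_le_iff₀ (by linarith)]
      linarith [abs_urnSum_le hδ ω]) (hτ _ hδ) (urnSum fun k => k * fwd h (k - 1))).trans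
    (add_le_add (mul_le_mul_of_nonneg_left ((hA α hα0).ballDirichlet_le hd hdn hm) (by norm_num))
      (hmul (hA 1 zero_le_one)))
  have hαC : 2 * (2 * α) ^ 2 * ballDirichlet (urnSum (n := n) (m := m) (fwd h))
      ≤ 8 * (4 * (d ^ 3 + 4 * d + 6) * 1 ^ 2 * Q) := by
    have h1 := (hC α hα0).ballDirichlet_le hd hdn hm
    have h2 : ballDirichlet (urnSum (n := n) (m := m) fun k => α * fwd h k)
        = α ^ 2 * ballDirichlet (urnSum (n := n) (m := m) (fwd h)) := by
      rw [← ballDirichlet_const_mul]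
      exact congrArg _ (funext fun ω => urnSum_const_mul α (fwd h) ω)
    rw [h2] at h1
    linarith
  have hE3 := (ballDirichlet_mul_le hm0 (c := 2 * α) (fun ω => by
      rw [abs_div, Nat.abs_cast, hα, ← mul_div_assoc, mul_comm 2]
      gcongr
      refine abs_urnSum_mul_le (fun k => ?_) ω
      rw [abs_mul, Nat.abs_cast]
      exact mul_le_mul_of_nonneg_left (hδ _) (Nat.cast_nonneg k)) (hτ _ hkδ')
      (urnSum (fwd h))).trans
    (add_le_add hαC (hmul (K := 1) (by simpa using hC 1 zero_le_one)))
  rw [e]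
  have hs1 := ballDirichlet_sub_le
    (fun ω : Fin n → Fin m =>
      urnSum φ ω - (urnSum (fwd g) ω / m) * urnSum (fun k => k * fwd h (k - 1)) ω)
    (fun ω => (urnSum (fun k => k * fwd g (k - 1)) ω / m) * urnSum (fwd h) ω)
  have hs2 := ballDirichlet_sub_le (urnSum (n := n) (m := m) φ)
    (fun ω => (urnSum (fwd g) ω / m) * urnSum (fun k => k * fwd h (k - 1)) ω)
  have hd2 : (2 : ℝ) ≤ d := by exact_mod_cast hd
  set c : ℝ := d ^ 3 + 4 * d + 6 with hc
  have hdc : (d : ℝ) ^ 2 + 8 ≤ c := by rw [hc]; nlinarith [sq_nonneg (d : ℝ)]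
  have h1 : (d ^ 2 + 8) * Q ≤ c * Q := mul_le_mul_of_nonneg_right hdc hQ0
  have hd1 : (1 : ℝ) ≤ (d + 1) ^ 2 := one_le_pow₀ (by linarith)
  have hcQ : 0 ≤ c * Q := mul_nonneg (by positivity) hQ0
  have h2 : c * Q ≤ (d + 1) ^ 2 * (c * Q) := le_mul_of_one_le_left hcQ hd1
  have h3 := mul_le_mul_of_nonneg_left h1 (sq_nonneg ((d : ℝ) + 1))
  linarith

end Level

section Occupancy

variable {n m : ℕ}

lemma uniformVar_const_mul {Ω : Type*} [Fintype Ω] (c : ℝ) (f : Ω → ℝ) :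
    uniformVar (fun x => c * f x) = c ^ 2 * uniformVar f := by
  simp only [uniformVar, ← Finset.mul_expect, ← mul_sub, mul_pow]

lemma urnCount_eq_urnSum (d : ℕ) (ω : Fin n → Fin m) :
    (urnCount d ω : ℝ) = urnSum (fun l => if l = d then 1 else 0) ω := by
  simp only [urnCount, urnSum, Finset.sum_boole]

lemma integral_occ (f : (Fin n → Fin m) → ℝ) : ∫ ω, f ω ∂(occ n m) = 𝔼 ω, f ω := by
  rw [occ, integral_smul_measure, integral_count, Fintype.expect_eq_sum_div_card]
  simp [div_eq_inv_mul]

lemma isProbabilityMeasure_occ (hm : 0 < m) : IsProbabilityMeasure (occ n m) := by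
  have : Nonempty (Fin m) := ⟨⟨0, hm⟩⟩
  constructor
  rw [occ, Measure.smul_apply, Measure.count_univ, ENat.card_eq_coe_fintype_card, smul_eq_mul]
  exact ENNReal.inv_mul_cancel (by simp [hm.ne']) (by simp)

lemma occ_toReal (hm : 0 < m) (s : Set (Fin n → Fin m)) [DecidablePred (· ∈ s)] :
    (occ n m s).toReal = 𝔼 ω, if ω ∈ s then (1 : ℝ) else 0 := by
  have := isProbabilityMeasure_occ (n := n) hm
  rw [← integral_occ, ← Measure.real_def, ← integral_indicator_one (Set.toFinite s).measurableSet]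
  simp [Set.indicator_apply]

lemma occMean_eq (d : ℕ) :
    occMean d n m = 𝔼 ω : Fin n → Fin m, urnSum (fun l => if l = d then 1 else 0) ω := by
  simp only [occMean, integral_occ, urnCount_eq_urnSum]

lemma occVar_eq (d : ℕ) :
    occVar d n m = uniformVar (urnSum (n := n) (m := m) fun l => if l = d then 1 else 0) := by
  rw [occVar, variance_eq_integral (measurable_of_finite _).aemeasurable]
  simp only [integral_occ, urnCount_eq_urnSum, uniformVar]

lemma abs_occKolm_le {d : ℕ} (hd : 2 ≤ d) (hdn : d ≤ n) (hm : 2 ≤ m) (z : ℝ) :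
    |occKolm d n m z| ≤ (Real.sqrt (3 * (10000 * (d ^ 3 + 4 * d + 6) * (d + 1) ^ 2))
        + 8 * Real.sqrt (3 * (4 * (d ^ 3 + 4 * d + 6) * (d + 1) ^ 2)))
      * (1 + n / m : ℝ) ^ 2 / Real.sqrt (occVar d n m) := by
  have hm0 : 0 < m := by omega
  have hm' : (0 : ℝ) < m := by positivity
  have : Nonempty (Fin m) := ⟨⟨0, hm0⟩⟩
  set Y : (Fin n → Fin m) → ℝ := urnSum fun l => if l = d then 1 else 0 with hY
  have hq : 0 < m * urnProb n m d := mul_pos hm' (urnProb_pos hm hdn)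
  have hVq := mul_urnProb_le_uniformVar (n := n) hd hm
  rw [← hY] at hVq
  set V := uniformVar Y with hV
  have hV0 : 0 < V := lt_of_lt_of_le (by positivity) hVq
  set α : ℝ := n / m with hα
  have hα0 : 0 ≤ α := by positivity
  obtain ⟨g, hg, hgen⟩ := exists_urnSum_generator_eq (n := n) hm hdn (by omega)
  have hg' : ∀ k : ℕ, (k + 1) * |fwd g k| ≤ 2 := by
    rw [hg]
    exact succ_mul_abs_urnStein_le hm d
  have hsqrt : ∀ {f : (Fin n → Fin m) → ℝ} {c : ℝ}, 0 ≤ c →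
      ballDirichlet f ≤ c * (m * urnProb n m d * (1 + α) ^ 4) →
      Real.sqrt (uniformVar f) ≤ Real.sqrt (3 * c) * (1 + α) ^ 2 * Real.sqrt V :=
    fun {f c} hc hf => by
      refine Real.sqrt_le_iff.2 ⟨by positivity, ?_⟩
      rw [mul_pow, mul_pow, Real.sq_sqrt (by positivity), Real.sq_sqrt hV0.le]
      have h1 : m * urnProb n m d ≤ 6 * V := by linarith
      calc uniformVar f ≤ ballDirichlet f / 2 := uniformVar_le_ballDirichlet hm0 f
        _ ≤ c * (6 * V * (1 + α) ^ 4) / 2 := by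
          gcongr
          exact hf.trans (by gcongr)
        _ = _ := by ring
  have hU := hsqrt (by positivity) (ballDirichlet_carre_le hd hdn hm hg')
  have hL := hsqrt (by positivity) (ballDirichlet_generator_le hd hdn hm)
  have hmean : 𝔼 ω, Y ω = m * urnProb n m d := by
    rw [urnProb, mul_div_cancel₀ _ hm'.ne']
  have key := reversibleMoves_ballMove.abs_expect_sub_stdGaussCDF_le_sqrt (Y := Y)
    (G := fun ω => urnSum g ω / m) (K := 4 / m) hV0 (by positivity) (fun ω => by
      rw [hmean]
      simp only [← sub_div]
      rw [← Finset.sum_div, hgen, mul_div_cancel_left₀ _ hm'.ne']) (fun ω p => by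
      rw [← sub_div, abs_div, Nat.abs_cast]
      gcongr
      refine (abs_urnSum_sub_ballMove_le (c := 2) (fun k => ?_) ω p).trans (by norm_num)
      nlinarith [hg' k, abs_nonneg (fwd g k), (Nat.cast_nonneg k : (0 : ℝ) ≤ k)]) z
  have e1 : (fun ω : Fin n → Fin m => ∑ p, (urnSum g ω / m - urnSum g (ballMove ω p) / m)
        * (Y ω - Y (ballMove ω p)))
      = fun ω => (∑ p, (urnSum g ω - urnSum g (ballMove ω p)) * (Y ω - Y (ballMove ω p))) / m := by
    funext ω
    rw [Finset.sum_div]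
    exact Finset.sum_congr rfl fun p _ => by ring
  have e2 : Real.sqrt (uniformVar fun ω : Fin n → Fin m => ∑ p, (Y ω - Y (ballMove ω p)))
      = m * Real.sqrt (uniformVar fun ω : Fin n → Fin m =>
          (∑ p, (Y ω - Y (ballMove ω p))) / m) := by
    have h1 : (fun ω : Fin n → Fin m => ∑ p, (Y ω - Y (ballMove ω p)))
        = fun ω => m * ((∑ p, (Y ω - Y (ballMove ω p))) / m) :=
      funext fun ω => (mul_div_cancel₀ _ hm'.ne').symm
    rw [h1, uniformVar_const_mul, Real.sqrt_mul (sq_nonneg _), Real.sqrt_sq hm'.le]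
  rw [e1, e2] at key
  have hK : occKolm d n m z = (𝔼 ω, if (Y ω - 𝔼 y, Y y) / Real.sqrt V ≤ z then (1 : ℝ) else 0)
      - stdGaussCDF z := by
    classical
    rw [occKolm, occ_toReal hm0, occMean_eq, occVar_eq]
    simp only [urnCount_eq_urnSum, Set.mem_ofPred_eq]
    rfl
  rw [hK, occVar_eq, ← hY, ← hV]
  refine key.trans ?_
  rw [div_le_div_iff₀ hV0 (Real.sqrt_pos.2 hV0)]
  have h8 : ∀ x : ℝ, 2 * (4 / m : ℝ) * (m * x) = 8 * x := fun x => by field_simp; ring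
  rw [h8]
  nth_rewrite 2 [← Real.mul_self_sqrt hV0.le]
  rw [← mul_assoc]
  refine mul_le_mul_of_nonneg_right ?_ (Real.sqrt_nonneg V)
  linarith

end Occupancy

/-- Theorem 1.1: Berry–Esseen bound for the uniform multinomial occupancy model. -/
theorem occupancy_berry_esseen (d : ℕ) (hd : 2 ≤ d) :
    ∃ C : ℝ, 0 < C ∧ ∀ n m : ℕ, d ≤ n → 2 ≤ m → ∀ z : ℝ,
      |occKolm d n m z| ≤ C / occR d n m := by
  set A : ℝ := Real.sqrt (3 * (10000 * (d ^ 3 + 4 * d + 6) * (d + 1) ^ 2))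
    + 8 * Real.sqrt (3 * (4 * (d ^ 3 + 4 * d + 6) * (d + 1) ^ 2)) with hA
  refine ⟨A * 4, by positivity, fun n m hdn hm z => (abs_occKolm_le hd hdn hm z).trans ?_⟩
  rw [← hA, occR, div_div_eq_mul_div, mul_assoc A]
  set α : ℝ := n / m
  have hα : 0 ≤ α := by positivity
  gcongr
  nlinarith [mul_nonneg hα (sq_nonneg (α - 1)), sq_nonneg (α - 1)]
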